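/- arXiv:2202.10742 — 4 statements merged into one kernel-verified Lean document; each statement's English description precedes it below -/
import Mathlib

section
/- Mehler–Heine asymptotics: for every compact set K ⊂ (0,∞), sup_{z∈K} | π_n^{(d/2,0)}(1 − z²/(2n²)) − 2^{d/2} Γ(d/2+1) z^{−d/2} J_{d/2}(z) | → 0 as n → ∞, where J_{d/2} is the Bessel function of the first kind of order d/2. -/
open MeasureTheory Matrix Filter Topology Real

noncomputable section

def latticeConv {d : ℕ} (ω x : (Fin d → ℤ) → ℝ) : (Fin d → ℤ) → ℝ :=
  fun v => ∑' η : Fin d → ℤ, ω (v - η) * x η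

def covQ (d : ℕ) (ω : (Fin d → ℤ) → ℝ) : Matrix (Fin d) (Fin d) ℝ :=
  Matrix.of fun i j => ∑' v : Fin d → ℤ, ω v * (v i : ℝ) * (v j : ℝ)

def ftOmega {d : ℕ} (ω : (Fin d → ℤ) → ℝ) (ξ : Fin d → ℝ) : ℂ :=
  ∑' v : Fin d → ℤ, (ω v : ℂ) * Complex.exp (Complex.I * ((∑ i, ξ i * (v i : ℝ) : ℝ) : ℂ))

def aCoef0 (d : ℕ) : ℝ := ((d : ℝ) + 4) / (2 * (2 + (d : ℝ)))
def bCoef0 (d : ℕ) : ℝ := (d : ℝ) / (2 * (2 + (d : ℝ)))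
def aCoef (d n : ℕ) : ℝ :=
  (2 * (n : ℝ) + (d : ℝ)/2 + 1) * (2 * (n : ℝ) + (d : ℝ)/2 + 2) / (2 * ((n : ℝ) + 1 + (d : ℝ)/2)^2)
def bCoef (d n : ℕ) : ℝ :=
  (d : ℝ)^2 * (2 * (n : ℝ) + (d : ℝ)/2 + 1) / (8 * ((n : ℝ) + 1 + (d : ℝ)/2)^2 * (2 * (n : ℝ) + (d : ℝ)/2))
def cCoef (d n : ℕ) : ℝ :=
  (n : ℝ)^2 * (2 * (n : ℝ) + (d : ℝ)/2 + 2) / (((n : ℝ) + 1 + (d : ℝ)/2)^2 * (2 * (n : ℝ) + (d : ℝ)/2))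

def besselJ (ν z : ℝ) : ℝ :=
  ∑' m : ℕ, ((-1 : ℝ)^m / ((m.factorial : ℝ) * Real.Gamma ((m : ℝ) + ν + 1))) * (z / 2) ^ (2 * (m : ℝ) + ν)

def jacobiP (α β : ℝ) (n : ℕ) (x : ℝ) : ℝ :=
  ∑ s ∈ Finset.range (n + 1),
    (Real.Gamma ((n : ℝ) + α + 1) / (Real.Gamma (α + (s : ℝ) + 1) * ((n - s).factorial : ℝ))) *
    (Real.Gamma ((n : ℝ) + β + 1) / (Real.Gamma ((n : ℝ) + β - (s : ℝ) + 1) * (s.factorial : ℝ))) *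
    ((x - 1) / 2) ^ s * ((x + 1) / 2) ^ (n - s)

def jacobiPi (α β : ℝ) (n : ℕ) (x : ℝ) : ℝ := jacobiP α β n x / jacobiP α β n 1

def pd {d : ℕ} (j : Fin d) (g : (Fin d → ℝ) → ℝ) : (Fin d → ℝ) → ℝ :=
  fun y => deriv (fun s => g (Function.update y j s)) (y j)

def mhC (α : ℝ) (s : ℕ) : ℝ := Real.Gamma (α + 1) / (Real.Gamma (α + (s : ℝ) + 1) * (s.factorial : ℝ))

def mhA (n s : ℕ) : ℝ := ((n.descFactorial s : ℝ) / (n : ℝ) ^ s) ^ 2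

lemma mhA_nonneg (n s : ℕ) : 0 ≤ mhA n s := sq_nonneg _

lemma mhA_le_one (n s : ℕ) : mhA n s ≤ 1 := by
  unfold mhA
  have h : (n.descFactorial s : ℝ) ≤ (n : ℝ) ^ s := by exact_mod_cast Nat.descFactorial_le_pow n s
  have h2 : (n.descFactorial s : ℝ) / (n : ℝ) ^ s ≤ 1 := div_le_one_of_le₀ h (by positivity)
  exact pow_le_one₀ (by positivity) h2

lemma mhA_tendsto (s : ℕ) : Tendsto (fun n : ℕ => mhA n s) atTop (𝓝 1) := by
  have key : Tendsto (fun n : ℕ => (n.descFactorial s : ℝ) / (n : ℝ) ^ s) atTop (𝓝 1) := by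
    induction s with
    | zero => simp
    | succ k ih =>
      have h1 : Tendsto (fun n : ℕ => (1 : ℝ) - (k : ℝ) / (n : ℝ)) atTop (𝓝 1) := by
        simpa using (tendsto_const_div_atTop_nhds_zero_nat (k : ℝ)).const_sub 1
      have h2 := h1.mul ih
      rw [one_mul] at h2
      refine h2.congr' ?_
      filter_upwards [eventually_ge_atTop (k + 1)] with n hn
      have hn0 : (n : ℝ) ≠ 0 := by
        have : n ≠ 0 := by omega
        exact_mod_cast this
      rw [Nat.descFactorial_succ, Nat.cast_mul, Nat.cast_sub (by omega)]
      field_simp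
      ring
  simpa [mhA] using key.pow 2

lemma mhGamma_mono (α : ℝ) (hα : 0 ≤ α) (s : ℕ) :
    Real.Gamma (α + 1) ≤ Real.Gamma (α + (s : ℝ) + 1) := by
  induction s with
  | zero => simp
  | succ k ih =>
    have hk : (0 : ℝ) ≤ k := Nat.cast_nonneg k
    have h1 : Real.Gamma (α + ((k + 1 : ℕ) : ℝ) + 1)
        = (α + (k : ℝ) + 1) * Real.Gamma (α + (k : ℝ) + 1) := by
      rw [← Real.Gamma_add_one (by positivity)]
      push_cast
      ring_nf
    have h2 : 0 < Real.Gamma (α + (k : ℝ) + 1) := Real.Gamma_pos_of_pos (by positivity)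
    rw [h1]
    nlinarith [mul_nonneg (add_nonneg hα hk) h2.le]

lemma mhC_nonneg (α : ℝ) (hα : 0 ≤ α) (s : ℕ) : 0 ≤ mhC α s := by
  have h2 : 0 < Real.Gamma (α + (s : ℝ) + 1) := Real.Gamma_pos_of_pos (by positivity)
  have h3 : 0 < Real.Gamma (α + 1) := Real.Gamma_pos_of_pos (by positivity)
  unfold mhC
  positivity

lemma mhC_le (α : ℝ) (hα : 0 ≤ α) (s : ℕ) : mhC α s ≤ 1 / (s.factorial : ℝ) := by
  have h2 : 0 < Real.Gamma (α + (s : ℝ) + 1) := Real.Gamma_pos_of_pos (by positivity)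
  have h4 : (0 : ℝ) < s.factorial := by exact_mod_cast s.factorial_pos
  unfold mhC
  rw [div_le_div_iff₀ (by positivity) h4, one_mul]
  exact mul_le_mul_of_nonneg_right (mhGamma_mono α hα s) h4.le

lemma mhC_summable (α : ℝ) (hα : 0 ≤ α) (M : ℝ) (hM : 0 ≤ M) :
    Summable (fun s : ℕ => mhC α s * M ^ s) := by
  refine Summable.of_nonneg_of_le (fun s => mul_nonneg (mhC_nonneg α hα s) (by positivity))
    (fun s => ?_) (Real.summable_pow_div_factorial M)
  have := mul_le_mul_of_nonneg_right (mhC_le α hα s) (pow_nonneg hM s)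
  calc _ ≤ _ := this
    _ = _ := by ring

lemma mh_bessel (α z : ℝ) (hz : 0 < z) :
    (2 : ℝ) ^ α * Real.Gamma (α + 1) * z ^ (-α) * besselJ α z
      = ∑' s : ℕ, mhC α s * (-(z ^ 2 / 4)) ^ s := by
  unfold besselJ
  rw [← tsum_mul_left]
  congr 1
  funext m
  have h1 : (z / 2) ^ (2 * (m : ℝ) + α) = (z ^ 2 / 4) ^ m * (z ^ α / 2 ^ α) := by
    rw [Real.rpow_add (by positivity), Real.div_rpow hz.le (by norm_num) α]
    congr 1
    rw [Real.rpow_mul (by positivity), Real.rpow_natCast]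
    congr 1
    norm_num [div_pow]
  have h2 : z ^ α ≠ 0 := (Real.rpow_pos_of_pos hz α).ne'
  have h3 : (2 : ℝ) ^ α ≠ 0 := (Real.rpow_pos_of_pos two_pos α).ne'
  rw [h1, Real.rpow_neg hz.le, neg_pow (z ^ 2 / 4), mhC, show (m : ℝ) + α + 1 = α + m + 1 by ring]
  field_simp

lemma mh_jacobi_one (α : ℝ) (n : ℕ) :
    jacobiP α 0 n 1 = Real.Gamma ((n : ℝ) + α + 1) / (Real.Gamma (α + 1) * n.factorial) := by
  unfold jacobiP
  rw [Finset.sum_eq_single 0]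
  · have : Real.Gamma ((n : ℝ) + 1) ≠ 0 := (Real.Gamma_pos_of_pos (by positivity)).ne'
    simp [this]
  · intro s _ hs
    simp [hs]
  · simp

lemma mh_jacobi (α z : ℝ) (hα : 0 ≤ α) (n : ℕ) (hn : 1 ≤ n) :
    jacobiPi α 0 n (1 - z ^ 2 / (2 * (n : ℝ) ^ 2))
      = ∑' s : ℕ, mhC α s * (-(z ^ 2 / 4)) ^ s * (mhA n s * (1 - z ^ 2 / 4 / (n : ℝ) ^ 2) ^ (n - s)) := by
  rw [tsum_eq_sum (s := Finset.range (n + 1))]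
  · rw [jacobiPi, mh_jacobi_one, jacobiP, Finset.sum_div]
    refine Finset.sum_congr rfl fun s hs => ?_
    have hsn : s ≤ n := by simpa [Nat.lt_succ_iff] using hs
    have hn0 : (n : ℝ) ≠ 0 := by positivity
    have e1 : (1 - z ^ 2 / (2 * (n : ℝ) ^ 2) - 1) / 2 = (-(z ^ 2 / 4)) / (n : ℝ) ^ 2 := by
      field_simp; ring
    have e2 : (1 - z ^ 2 / (2 * (n : ℝ) ^ 2) + 1) / 2 = 1 - z ^ 2 / 4 / (n : ℝ) ^ 2 := by
      field_simp; ring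
    have e3 : Real.Gamma ((n : ℝ) + 0 + 1) = n.factorial := by
      rw [add_zero, Real.Gamma_nat_eq_factorial]
    have e4 : Real.Gamma ((n : ℝ) + 0 - (s : ℝ) + 1) = (n - s).factorial := by
      rw [add_zero, ← Nat.cast_sub hsn, Real.Gamma_nat_eq_factorial]
    have e5 : (n.factorial : ℝ) = (n - s).factorial * n.descFactorial s := by
      exact_mod_cast (Nat.factorial_mul_descFactorial hsn).symm
    have g1 : Real.Gamma ((n : ℝ) + α + 1) ≠ 0 := (Real.Gamma_pos_of_pos (by positivity)).ne'
    have g2 : Real.Gamma (α + (s : ℝ) + 1) ≠ 0 := (Real.Gamma_pos_of_pos (by positivity)).ne'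
    have g3 : Real.Gamma (α + 1) ≠ 0 := (Real.Gamma_pos_of_pos (by positivity)).ne'
    have f1 : ((n - s).factorial : ℝ) ≠ 0 := by exact_mod_cast (Nat.factorial_pos _).ne'
    have f2 : (s.factorial : ℝ) ≠ 0 := by exact_mod_cast (Nat.factorial_pos _).ne'
    rw [e1, e2, e3, e4, e5, mhC, mhA, div_pow (-(z ^ 2 / 4))]
    generalize (1 - z ^ 2 / 4 / (n : ℝ) ^ 2) ^ (n - s) = W
    generalize (-(z ^ 2 / 4)) ^ s = V
    rw [← pow_mul, div_pow, ← pow_mul, mul_comm 2 s]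
    field_simp
  · intro s hs
    have : n < s := by simpa using hs
    simp [mhA, Nat.descFactorial_eq_zero_iff_lt.mpr this]

lemma mh_bound (α M z : ℝ) (hα : 0 ≤ α) (hz : z ^ 2 / 4 ≤ M) (hz0 : 0 < z) (n : ℕ) (hn : 1 ≤ n)
    (hM : M ≤ n) :
    |jacobiPi α 0 n (1 - z ^ 2 / (2 * (n : ℝ) ^ 2)) -
      (2 : ℝ) ^ α * Real.Gamma (α + 1) * z ^ (-α) * besselJ α z|
      ≤ ∑' s : ℕ, mhC α s * M ^ s * (1 - mhA n s * (1 - M / n)) := by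
  have ht0 : 0 ≤ z ^ 2 / 4 := by positivity
  have hM0 : 0 ≤ M := ht0.trans hz
  have hn1 : (1 : ℝ) ≤ n := by exact_mod_cast hn
  have hn0 : (0 : ℝ) < n := by linarith
  have hS := mhC_summable α hα M hM0
  have hMn : 0 ≤ M / n := by positivity
  have hMn1 : M / n ≤ 1 := div_le_one_of_le₀ hM hn0.le
  have hSB : Summable (fun s : ℕ => mhC α s * M ^ s * (1 - mhA n s * (1 - M / n))) := by
    have hcm : ∀ s, 0 ≤ mhC α s * M ^ s := fun s => mul_nonneg (mhC_nonneg α hα s) (by positivity)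
    refine Summable.of_nonneg_of_le (fun s => mul_nonneg (hcm s) ?_) (fun s => ?_) hS
    · nlinarith [mhA_nonneg n s, mhA_le_one n s]
    · refine mul_le_of_le_one_right (hcm s) ?_
      nlinarith [mul_nonneg (mhA_nonneg n s) (sub_nonneg.2 hMn1)]
  rw [mh_jacobi α z hα n hn, mh_bessel α z hz0]
  set t := z ^ 2 / 4 with ht
  set w := 1 - t / (n : ℝ) ^ 2 with hw
  have hw1 : w ≤ 1 := by
    have : 0 ≤ t / (n : ℝ) ^ 2 := by positivity
    linarith
  have htn : t / (n : ℝ) ^ 2 ≤ 1 := by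
    apply div_le_one_of_le₀ _ (by positivity)
    nlinarith
  have hw0 : 0 ≤ w := by linarith
  have hwp : ∀ s, 1 - M / n ≤ w ^ (n - s) := by
    intro s
    have b1 : w ^ n ≤ w ^ (n - s) := pow_le_pow_of_le_one hw0 hw1 (Nat.sub_le n s)
    have b2 := one_add_mul_le_pow (a := -(t / (n : ℝ) ^ 2)) (by linarith) n
    rw [← sub_eq_add_neg, ← hw] at b2
    have b3 : (n : ℝ) * -(t / (n : ℝ) ^ 2) = - (t / n) := by field_simp
    have b4 : t / n ≤ M / n := by gcongr
    linarith
  have habs : ∀ s, |mhC α s * (-t) ^ s| ≤ mhC α s * M ^ s := by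
    intro s
    rw [abs_mul, abs_of_nonneg (mhC_nonneg α hα s), abs_pow, abs_neg, abs_of_nonneg ht0]
    exact mul_le_mul_of_nonneg_left (pow_le_pow_left₀ ht0 hz s) (mhC_nonneg α hα s)
  have s2 : Summable (fun s : ℕ => mhC α s * (-t) ^ s) :=
    Summable.of_norm_bounded hS habs
  have hq : ∀ s, mhA n s * w ^ (n - s) ≤ 1 := fun s =>
    mul_le_one₀ (mhA_le_one n s) (by positivity) (pow_le_one₀ hw0 hw1)
  have hq0 : ∀ s, 0 ≤ mhA n s * w ^ (n - s) := fun s =>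
    mul_nonneg (mhA_nonneg n s) (by positivity)
  have s1 : Summable (fun s : ℕ => mhC α s * (-t) ^ s * (mhA n s * w ^ (n - s))) := by
    refine Summable.of_norm_bounded hS fun s => ?_
    rw [Real.norm_eq_abs, abs_mul, abs_of_nonneg (hq0 s)]
    exact (mul_le_of_le_one_right (abs_nonneg _) (hq s)).trans (habs s)
  rw [← s1.tsum_sub s2, ← Real.norm_eq_abs]
  refine tsum_of_norm_bounded hSB.hasSum fun s => ?_
  rw [Real.norm_eq_abs, ← mul_sub_one, abs_mul, abs_sub_comm, abs_of_nonneg (sub_nonneg.2 (hq s))]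
  refine mul_le_mul (habs s) ?_ (sub_nonneg.2 (hq s)) ((abs_nonneg _).trans (habs s))
  have := mul_le_mul_of_nonneg_left (hwp s) (mhA_nonneg n s)
  linarith

lemma mh_bound_tendsto (α M : ℝ) (hα : 0 ≤ α) (hM : 0 ≤ M) :
    Tendsto (fun n : ℕ => ∑' s : ℕ, mhC α s * M ^ s * (1 - mhA n s * (1 - M / n))) atTop (𝓝 0) := by
  have h0 : (0 : ℝ) = ∑' _ : ℕ, (0 : ℝ) := by simp
  rw [h0]
  refine tendsto_tsum_of_dominated_convergence (mhC_summable α hα M hM) (fun s => ?_) ?_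
  · have h1 : Tendsto (fun n : ℕ => 1 - M / (n : ℝ)) atTop (𝓝 1) := by
      simpa using (tendsto_const_div_atTop_nhds_zero_nat M).const_sub 1
    simpa using (((mhA_tendsto s).mul h1).const_sub 1).const_mul (mhC α s * M ^ s)
  · obtain ⟨N, hN⟩ := exists_nat_ge M
    filter_upwards [eventually_ge_atTop (N + 1)] with n hn s
    have hn1 : (N : ℝ) + 1 ≤ n := by exact_mod_cast hn
    have hn0 : (0 : ℝ) < n := by linarith
    have hMn : 0 ≤ M / n := by positivity
    have hMn1 : M / n ≤ 1 := div_le_one_of_le₀ (by linarith) hn0.le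
    have hcm : 0 ≤ mhC α s * M ^ s := mul_nonneg (mhC_nonneg α hα s) (by positivity)
    have p1 : 0 ≤ 1 - mhA n s * (1 - M / n) := by nlinarith [mhA_nonneg n s, mhA_le_one n s]
    rw [Real.norm_eq_abs, abs_of_nonneg (mul_nonneg hcm p1)]
    refine mul_le_of_le_one_right hcm ?_
    nlinarith [mul_nonneg (mhA_nonneg n s) (sub_nonneg.2 hMn1)]

/-- Mehler–Heine asymptotics for the normalized Jacobi polynomials, uniformly on compact
subsets of (0,∞). -/
theorem mehler_heine_asymptotics
    (d : ℕ) (hd : 1 ≤ d) :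
    ∀ K : Set ℝ, IsCompact K → K ⊆ Set.Ioi 0 →
      Tendsto (fun n : ℕ => ⨆ z : K,
          |jacobiPi ((d : ℝ) / 2) 0 n (1 - (z : ℝ) ^ 2 / (2 * (n : ℝ) ^ 2)) -
            (2 : ℝ) ^ ((d : ℝ) / 2) * Real.Gamma ((d : ℝ) / 2 + 1) *
              (z : ℝ) ^ (-(d : ℝ) / 2) * besselJ ((d : ℝ) / 2) (z : ℝ)|)
        atTop (𝓝 0) := by
  intro K hK hK0
  have hα : (0 : ℝ) ≤ (d : ℝ) / 2 := by positivity
  obtain ⟨R, hR⟩ := hK.isBounded.subset_closedBall 0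
  have hM : 0 ≤ R ^ 2 / 4 := by positivity
  obtain ⟨N, hN⟩ := exists_nat_ge (R ^ 2 / 4)
  refine squeeze_zero' (Eventually.of_forall fun n => Real.iSup_nonneg fun z => abs_nonneg _) ?_
    (mh_bound_tendsto ((d : ℝ) / 2) (R ^ 2 / 4) hα hM)
  filter_upwards [eventually_ge_atTop (N + 1)] with n hn
  have hn1 : (N : ℝ) + 1 ≤ n := by exact_mod_cast hn
  have hn0 : (0 : ℝ) < n := by linarith
  have hMn : 0 ≤ R ^ 2 / 4 / n := by positivity
  have hMn1 : R ^ 2 / 4 / n ≤ 1 := div_le_one_of_le₀ (by linarith) hn0.le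
  refine Real.iSup_le (fun z => ?_) ?_
  · have hz0 : 0 < (z : ℝ) := hK0 z.2
    have hzR : (z : ℝ) ≤ R := by
      have := hR z.2
      rw [mem_closedBall_zero_iff, Real.norm_eq_abs] at this
      exact (le_abs_self _).trans this
    rw [neg_div]
    exact mh_bound _ _ _ hα (by gcongr) hz0 n (by omega) (by linarith)
  · refine tsum_nonneg fun s => mul_nonneg (mul_nonneg (mhC_nonneg _ hα s) (by positivity)) ?_
    nlinarith [mhA_nonneg n s, mhA_le_one n s]
end
end

section
/- There exist constants C₁, C₂ > 0 such that for every n ≥ 1 and every λ ∈ [−1,1]: if |λ| ≤ 1 − 1/n², then |π_n^{(d/2,0)}(λ)| ≤ C₁ (arccos|λ|)^{−d/2−1/2} n^{−d/2−1/2}, and otherwise |π_n^{(d/2,0)}(λ)| ≤ C₂. (Uniform bounds on normalized Jacobi polynomials over the support of the orthogonality measure.) -/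
open MeasureTheory Matrix Filter Topology Real

noncomputable section

def jcoef (α : ℝ) (n s : ℕ) : ℝ :=
    (Real.Gamma ((n : ℝ) + α + 1) / (Real.Gamma (α + (s : ℝ) + 1) * ((n - s).factorial : ℝ))) *
    (Real.Gamma ((n : ℝ) + 0 + 1) / (Real.Gamma ((n : ℝ) + 0 - (s : ℝ) + 1) * (s.factorial : ℝ)))

lemma jcoef_eq (α : ℝ) (n s : ℕ) (hs : s ≤ n) : jcoef α n s =
    (Real.Gamma ((n : ℝ) + α + 1) / (Real.Gamma (α + (s : ℝ) + 1) * ((n - s).factorial : ℝ))) *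
    ((n.factorial : ℝ) / (((n - s).factorial : ℝ) * (s.factorial : ℝ))) := by
  unfold jcoef
  have h1 : Real.Gamma ((n : ℝ) + 0 + 1) = n.factorial := by
    rw [add_zero, Real.Gamma_nat_eq_factorial]
  have h2 : Real.Gamma ((n : ℝ) + 0 - s + 1) = (n - s).factorial := by
    rw [add_zero, ← Nat.cast_sub hs, Real.Gamma_nat_eq_factorial]
  rw [h1, h2]

lemma jcoef_rec (α : ℝ) (hα : 0 < α) (n s : ℕ) (hs : s < n) :
    jcoef α n (s+1) * ((α + s + 1) * (s + 1)) = jcoef α n s * ((n : ℝ) - s) ^ 2 := by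
  rw [jcoef_eq α n s hs.le, jcoef_eq α n (s+1) hs]
  obtain ⟨k, rfl⟩ : ∃ k, n = s + 1 + k := ⟨n - (s+1), by omega⟩
  have e1 : s + 1 + k - (s + 1) = k := by omega
  have e2 : s + 1 + k - s = k + 1 := by omega
  rw [e1, e2]
  have hp : (0:ℝ) < α + s + 1 := by positivity
  have hG : Real.Gamma (α + ((s + 1 : ℕ) : ℝ) + 1) = (α + s + 1) * Real.Gamma (α + s + 1) := by
    push_cast
    rw [← Real.Gamma_add_one hp.ne']
    ring_nf
  rw [hG, Nat.factorial_succ k, Nat.factorial_succ s]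
  have hGp := (Real.Gamma_pos_of_pos hp).ne'
  have hk : ((k.factorial : ℕ) : ℝ) ≠ 0 := by positivity
  have hs' : ((s.factorial : ℕ) : ℝ) ≠ 0 := by positivity
  push_cast
  have hk1 : (k:ℝ) + 1 ≠ 0 := by positivity
  have hs1 : (s:ℝ) + 1 ≠ 0 := by positivity
  field_simp
  ring

def jY (α : ℝ) (n : ℕ) (t : ℝ) : ℝ :=
  ∑ s ∈ Finset.range (n + 1), jcoef α n s * (t ^ s * (1 + t) ^ (n - s))

def jY1 (α : ℝ) (n : ℕ) (t : ℝ) : ℝ :=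
  ∑ s ∈ Finset.range (n + 1), jcoef α n s *
    ((s * t ^ (s - 1)) * (1 + t) ^ (n - s) + t ^ s * (((n - s : ℕ) : ℝ) * (1 + t) ^ (n - s - 1)))

def jY2 (α : ℝ) (n : ℕ) (t : ℝ) : ℝ :=
  ∑ s ∈ Finset.range (n + 1), jcoef α n s *
    (((s * (((s - 1 : ℕ) : ℝ) * t ^ (s - 1 - 1))) * (1 + t) ^ (n - s)
      + (s * t ^ (s - 1)) * (((n - s : ℕ) : ℝ) * (1 + t) ^ (n - s - 1))) +
     ((s * t ^ (s - 1)) * (((n - s : ℕ) : ℝ) * (1 + t) ^ (n - s - 1))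
      + t ^ s * (((n - s : ℕ) : ℝ) * (((n - s - 1 : ℕ) : ℝ) * (1 + t) ^ (n - s - 1 - 1)))))

lemma jpow_deriv (m : ℕ) (t : ℝ) :
    HasDerivAt (fun t : ℝ => (1 + t) ^ m) ((m : ℝ) * (1 + t) ^ (m - 1)) t := by
  have h : HasDerivAt (fun t : ℝ => (1 + t) ^ m) _ t := ((hasDerivAt_id t).const_add 1).pow m
  refine h.congr_deriv ?_
  simp

lemma jY_deriv (α : ℝ) (n : ℕ) (t : ℝ) : HasDerivAt (jY α n) (jY1 α n t) t := by
  unfold jY jY1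
  apply HasDerivAt.fun_sum
  intro s _
  exact ((hasDerivAt_pow s t).mul (jpow_deriv (n - s) t)).const_mul _

lemma jY1_deriv (α : ℝ) (n : ℕ) (t : ℝ) : HasDerivAt (jY1 α n) (jY2 α n t) t := by
  unfold jY1 jY2
  apply HasDerivAt.fun_sum
  intro s _
  exact ((((hasDerivAt_pow (s-1) t).const_mul _).mul (jpow_deriv (n - s) t)).add
    ((hasDerivAt_pow s t).mul ((jpow_deriv (n - s - 1) t).const_mul _))).const_mul _

lemma jterm (α t : ℝ) (s m : ℕ) :
    t * (1 + t) * (((s * (((s - 1 : ℕ) : ℝ) * t ^ (s - 1 - 1))) * (1 + t) ^ m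
      + (s * t ^ (s - 1)) * ((m : ℝ) * (1 + t) ^ (m - 1))) +
     ((s * t ^ (s - 1)) * ((m : ℝ) * (1 + t) ^ (m - 1))
      + t ^ s * ((m : ℝ) * (((m - 1 : ℕ) : ℝ) * (1 + t) ^ (m - 1 - 1)))))
    + (α + 1 + (α + 2) * t) *
      ((s * t ^ (s - 1)) * (1 + t) ^ m + t ^ s * ((m : ℝ) * (1 + t) ^ (m - 1)))
    - ((s:ℝ) + m) * ((s:ℝ) + m + α + 1) * (t ^ s * (1 + t) ^ m)
    = s * (s + α) * (t ^ (s - 1) * (1 + t) ^ m) - (m : ℝ) ^ 2 * (t ^ s * (1 + t) ^ (m - 1)) := by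
  rcases s with _ | _ | s <;> rcases m with _ | _ | m <;> simp <;> ring

lemma jY_ode (α : ℝ) (hα : 0 < α) (n : ℕ) (t : ℝ) :
    t * (1 + t) * jY2 α n t + (α + 1 + (α + 2) * t) * jY1 α n t
      - (n : ℝ) * (n + α + 1) * jY α n t = 0 := by
  unfold jY jY1 jY2
  rw [Finset.mul_sum, Finset.mul_sum, Finset.mul_sum, ← Finset.sum_add_distrib,
    ← Finset.sum_sub_distrib]
  let h : ℕ → ℝ := fun s => if s ≤ n then
    jcoef α n s * (s * (s + α) * (t ^ (s - 1) * (1 + t) ^ (n - s))) else 0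
  rw [Finset.sum_congr rfl (g := fun s => h s - h (s + 1)) ?_, Finset.sum_range_sub']
  · simp [h]
  · intro s hs
    have hs' : s ≤ n := by simpa [Nat.lt_succ_iff] using hs
    have ht := jterm α t s (n - s)
    have hc : (s : ℝ) + ((n - s : ℕ) : ℝ) = n := by rw [Nat.cast_sub hs']; ring
    rw [hc] at ht
    have e2 : h (s + 1) = jcoef α n s *
        (((n - s : ℕ) : ℝ) ^ 2 * (t ^ s * (1 + t) ^ (n - s - 1))) := by
      by_cases hsn : s < n
      · have hr := jcoef_rec α hα n s hsn
        have : s + 1 ≤ n := hsn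
        simp only [h, this, if_true]
        rw [Nat.cast_sub hs', ← mul_assoc, ← mul_assoc (jcoef α n s), ← hr]
        have : n - (s + 1) = n - s - 1 := by omega
        rw [this]
        push_cast
        ring_nf
      · have : s = n := by omega
        subst this
        simp [h]
    have e1 : h s = jcoef α n s * (s * (s + α) * (t ^ (s - 1) * (1 + t) ^ (n - s))) := by
      simp [h, hs']
    rw [e1, e2, ← mul_sub, ← ht]
    ring

lemma jacobiP_eq (α : ℝ) (n : ℕ) (x : ℝ) : jacobiP α 0 n x = jY α n ((x - 1) / 2) := by
  unfold jacobiP jY jcoef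
  apply Finset.sum_congr rfl
  intro s _
  have : (x + 1) / 2 = 1 + (x - 1) / 2 := by ring
  rw [this]; ring

lemma jY_zero (α : ℝ) (n : ℕ) : jY α n 0 = jcoef α n 0 := by
  unfold jY
  rw [Finset.sum_eq_single 0]
  · simp
  · intro b _ hb; simp [hb]
  · simp

lemma jY_neg_one (α : ℝ) (hα : 0 < α) (n : ℕ) : (jY α n (-1)) ^ 2 = 1 := by
  unfold jY
  rw [Finset.sum_eq_single n]
  · rw [jcoef_eq α n n le_rfl]
    have hp : (0:ℝ) < α + n + 1 := by positivity
    have := (Real.Gamma_pos_of_pos hp).ne'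
    have hn : ((n.factorial : ℕ) : ℝ) ≠ 0 := by positivity
    have e : (n:ℝ) + α + 1 = α + n + 1 := by ring
    rw [e]
    simp [this, hn]
    exact neg_one_pow_eq_or ℝ n
  · intro b hb hbn
    have : n - b ≠ 0 := by simp at hb; omega
    simp [this]
  · simp

lemma jcoef_zero_ge (α : ℝ) (hα : 0 < α) (n : ℕ) : 1 ≤ jcoef α n 0 := by
  rw [jcoef_eq α n 0 (Nat.zero_le _)]
  have hn : (0:ℝ) < ((n.factorial : ℕ) : ℝ) := by positivity
  have hG0 : 0 < Real.Gamma (α + 1) := Real.Gamma_pos_of_pos (by positivity)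
  have h : Real.Gamma (α + 1) * n.factorial ≤ Real.Gamma ((n:ℝ) + α + 1) := by
    clear hn
    induction n with
    | zero => simp
    | succ k ih =>
      have hp : (0:ℝ) < k + α + 1 := by positivity
      have hG : Real.Gamma (((k + 1 : ℕ) : ℝ) + α + 1) = (k + α + 1) * Real.Gamma (k + α + 1) := by
        push_cast
        rw [← Real.Gamma_add_one hp.ne']
        ring_nf
      rw [hG, Nat.factorial_succ]
      push_cast
      have : (k:ℝ) + 1 ≤ k + α + 1 := by linarith
      calc Real.Gamma (α + 1) * (((k:ℝ) + 1) * k.factorial)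
          = ((k:ℝ) + 1) * (Real.Gamma (α + 1) * k.factorial) := by ring
        _ ≤ _ := by gcongr
  simp only [Nat.sub_zero, Nat.cast_zero, add_zero, Nat.factorial_zero, Nat.cast_one, mul_one]
  rw [div_self hn.ne', mul_one, le_div_iff₀ (by positivity)]
  linarith

lemma sonin1 (α lam : ℝ) (hα : 0 < α) (Y Y1 Y2 : ℝ → ℝ)
    (h1 : ∀ t, HasDerivAt Y (Y1 t) t) (h2 : ∀ t, HasDerivAt Y1 (Y2 t) t)
    (ode : ∀ t, t * (1 + t) * Y2 t + (α + 1 + (α + 2) * t) * Y1 t - lam * Y t = 0)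
    (hlam : 0 ≤ lam) (hb : Y (-1) ^ 2 ≤ Y 0 ^ 2) (t : ℝ) (ht : t ∈ Set.Icc (-1:ℝ) 0) :
    lam * Y t ^ 2 + (-t) * (1 + t) * Y1 t ^ 2 ≤ lam * Y 0 ^ 2 := by
  set G : ℝ → ℝ := fun t => lam * Y t ^ 2 + (-t) * (1 + t) * Y1 t ^ 2 with hG
  have hd : ∀ t, HasDerivAt G (Y1 t ^ 2 * (2 * α + 1 + (2 * α + 2) * t)) t := by
    intro t
    have this : HasDerivAt G _ t := (((h1 t).pow 2).const_mul lam).add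
      ((((hasDerivAt_id t).neg).mul ((hasDerivAt_id t).const_add 1)).mul ((h2 t).pow 2))
    refine this.congr_deriv ?_
    simp
    linear_combination (-2 * Y1 t) * ode t
  have hdiff : Differentiable ℝ G := fun t => (hd t).differentiableAt
  set ts : ℝ := -(2 * α + 1) / (2 * α + 2) with hts
  have hpos : 0 < 2 * α + 2 := by linarith
  have hts0 : (2 * α + 2) * ts = -(2 * α + 1) := by rw [hts]; field_simp
  have hts1 : -1 ≤ ts := by nlinarith
  have hts2 : ts ≤ 0 := by nlinarith
  by_cases hc : ts ≤ t
  · have hm : MonotoneOn G (Set.Icc ts 0) := by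
      apply monotoneOn_of_deriv_nonneg (convex_Icc _ _) hdiff.continuous.continuousOn
        hdiff.differentiableOn
      intro x hx
      rw [interior_Icc] at hx
      rw [(hd x).deriv]
      have : 0 ≤ 2 * α + 1 + (2 * α + 2) * x := by nlinarith [hx.1]
      positivity
    have := hm ⟨hc, ht.2⟩ ⟨hts2, le_rfl⟩ ht.2
    simpa [hG] using this
  · push Not at hc
    have hm : AntitoneOn G (Set.Icc (-1) ts) := by
      apply antitoneOn_of_deriv_nonpos (convex_Icc _ _) hdiff.continuous.continuousOn
        hdiff.differentiableOn
      intro x hx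
      rw [interior_Icc] at hx
      rw [(hd x).deriv]
      have : 2 * α + 1 + (2 * α + 2) * x ≤ 0 := by nlinarith [hx.2]
      nlinarith [sq_nonneg (Y1 x)]
    have := hm ⟨le_rfl, hts1⟩ ⟨ht.1, hc.le⟩ ht.1
    have h3 : G (-1) = lam * Y (-1) ^ 2 := by simp [hG]
    rw [h3] at this
    exact this.trans (by gcongr)

lemma jW_deriv (p t : ℝ) (h1 : -1 < t) (h0 : t < 0) :
    HasDerivAt (fun t : ℝ => (-t) ^ p * (1 + t) ^ (1 / 2 : ℝ))
      ((-t) ^ p * (1 + t) ^ (1 / 2 : ℝ) * (-p / (-t) + 1 / (2 * (1 + t)))) t := by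
  have ha : 0 < -t := by linarith
  have hb : 0 < 1 + t := by linarith
  have this : HasDerivAt (fun t : ℝ => (-t) ^ p * (1 + t) ^ (1 / 2 : ℝ)) _ t :=
    (((hasDerivAt_id t).neg).rpow_const (p := p) (Or.inl ha.ne')).mul
    (((hasDerivAt_id t).const_add 1).rpow_const (p := (1/2 : ℝ)) (Or.inl hb.ne'))
  refine this.congr_deriv ?_
  simp only [id, Pi.neg_apply]
  rw [Real.rpow_sub_one ha.ne', Real.rpow_sub_one hb.ne']
  field_simp

lemma sonin2 (α n : ℝ) (hα : 1 / 2 ≤ α) (hn : 1 ≤ n) (Y Y1 Y2 : ℝ → ℝ)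
    (h1 : ∀ t, HasDerivAt Y (Y1 t) t) (h2 : ∀ t, HasDerivAt Y1 (Y2 t) t)
    (ode : ∀ t, t * (1 + t) * Y2 t + (α + 1 + (α + 2) * t) * Y1 t - n * (n + α + 1) * Y t = 0)
    (t0 : ℝ) (ht00 : t0 < 0) (ht0 : α ^ 2 ≤ 2 * (-t0) * n ^ 2) (t : ℝ) (ht : -1 < t) (htt : t ≤ t0) :
    (-t) ^ (α + 1/2) * (1 + t) ^ (1 / 2 : ℝ) * Y t ^ 2 ≤
      (-t0) ^ (α + 1/2) * (1 + t0) ^ (1 / 2 : ℝ) * (Y t0 ^ 2 +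
        (((α + 1/2) * (1 + t0) - (-t0) / 2) * Y t0 - 2 * (-t0) * (1 + t0) * Y1 t0) ^ 2 /
          (4 * (n + (α + 1) / 2) ^ 2 * (-t0) * (1 + t0) + (1/4 - α^2) * (1 + t0) + (-t0) / 4)) := by
  set W : ℝ → ℝ := fun t => (-t) ^ (α + 1/2) * (1 + t) ^ (1 / 2 : ℝ) with hW
  set B : ℝ → ℝ := fun t =>
    ((α + 1/2) * (1 + t) - (-t) / 2) * Y t - 2 * (-t) * (1 + t) * Y1 t with hB
  set R : ℝ → ℝ := fun t =>
    4 * (n + (α + 1) / 2) ^ 2 * (-t) * (1 + t) + (1/4 - α^2) * (1 + t) + (-t) / 4 with hR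
  set E : ℝ → ℝ := fun t => W t * (Y t ^ 2 + B t ^ 2 / R t) with hE
  have hRpos : ∀ t, -1 < t → t ≤ t0 → 0 < R t := by
    intro t hta htb
    have ha : 0 < -t := by linarith
    have hb : 0 < 1 + t := by linarith
    have e1 : α ^ 2 ≤ 2 * (-t) * n ^ 2 := by nlinarith [sq_nonneg n]
    have e2 : n ^ 2 ≤ (n + (α + 1) / 2) ^ 2 := by gcongr; linarith
    have e3 : 0 < (-t) * (1 + t) := by positivity
    have e4 : n ^ 2 * ((-t) * (1 + t)) ≤ (n + (α + 1) / 2) ^ 2 * ((-t) * (1 + t)) := by gcongr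
    have e5 : α ^ 2 * (1 + t) ≤ 2 * (-t) * n ^ 2 * (1 + t) := by gcongr
    have e6 : 0 < n ^ 2 * ((-t) * (1 + t)) := by positivity
    simp only [hR]
    nlinarith
  have hd : ∀ t, -1 < t → t ≤ t0 → HasDerivAt E (W t * (B t ^ 2 / R t ^ 2) *
      (4 * (-t) * (1 + t) * ((α ^ 2 - 1/4) / (4 * (-t) ^ 2) + 1 / (16 * (1 + t) ^ 2)))) t := by
    intro t hta htb
    have ha : 0 < -t := by linarith
    have hb : 0 < 1 + t := by linarith
    have hr := hRpos t hta htb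
    have dW : HasDerivAt W (W t * (-(α + 1/2) / (-t) + 1 / (2 * (1 + t)))) t :=
      jW_deriv _ t hta (by linarith)
    have dB : HasDerivAt B ((α + 1) * Y t + ((α + 1/2) * (1 + t) - (-t) / 2) * Y1 t
        - 2 * (-t - (1 + t)) * Y1 t - 2 * (-t) * (1 + t) * Y2 t) t := by
      have this : HasDerivAt B _ t := (((((hasDerivAt_id t).const_add 1).const_mul (α + 1/2)).sub
        (((hasDerivAt_id t).neg).div_const 2)).mul (h1 t)).sub
        (((((hasDerivAt_id t).neg).const_mul 2).mul ((hasDerivAt_id t).const_add 1)).mul (h2 t))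
      refine this.congr_deriv ?_
      simp
      ring
    have dR : HasDerivAt R (4 * (n + (α + 1) / 2) ^ 2 * (-t - (1 + t)) + (1/4 - α^2) - 1 / 4) t := by
      have this : HasDerivAt R _ t := (((((hasDerivAt_id t).neg).const_mul (4 * (n + (α + 1) / 2) ^ 2)).mul
        ((hasDerivAt_id t).const_add 1)).add
        (((hasDerivAt_id t).const_add 1).const_mul (1/4 - α^2))).add
        (((hasDerivAt_id t).neg).div_const 4)
      refine this.congr_deriv ?_
      simp
      ring
    have this : HasDerivAt E _ t := dW.mul (((h1 t).pow 2).add ((dB.pow 2).div dR hr.ne'))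
    refine this.congr_deriv ?_
    have htn : t ≠ 0 := by linarith
    have hbn := hb.ne'
    have hRt : R t = 4 * (n + (α + 1) / 2) ^ 2 * (-t) * (1 + t) + (1/4 - α^2) * (1 + t) + (-t) / 4 := rfl
    have hBt : B t = ((α + 1/2) * (1 + t) - (-t) / 2) * Y t - 2 * (-t) * (1 + t) * Y1 t := rfl
    have hod := ode t
    have q1 : (α + 1) * Y t + ((α + 1/2) * (1 + t) - (-t) / 2) * Y1 t
        - 2 * (-t - (1 + t)) * Y1 t - 2 * (-t) * (1 + t) * Y2 t
        = (R t * Y t + ((α + 1/2) * (1 + t) - (-t) / 2 + (-t) - (1 + t)) * B t)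
          / (2 * (-t) * (1 + t)) := by
      rw [eq_div_iff (by positivity), hRt, hBt]
      linear_combination (4 * (-t) * (1 + t)) * hod
    have q2 : 4 * (-t) * (1 + t) * ((α ^ 2 - 1/4) / (4 * (-t) ^ 2) + 1 / (16 * (1 + t) ^ 2))
        = R t * (-t - (1 + t)) / ((-t) * (1 + t))
          - (4 * (n + (α + 1) / 2) ^ 2 * (-t - (1 + t)) + (1/4 - α^2) - 1 / 4) := by
      rw [hRt]
      field_simp
      ring
    have q3 : Y1 t = (((α + 1/2) * (1 + t) - (-t) / 2) * Y t - B t) / (2 * (-t) * (1 + t)) := by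
      rw [eq_div_iff (by positivity), hBt]
      ring
    simp only [Pi.add_apply, Pi.pow_apply, Pi.div_apply]
    rw [q1, q2, q3]
    have hrne := hr.ne'
    generalize W t = w
    generalize R t = r at *
    generalize B t = bb at *
    generalize Y t = y
    field_simp
    ring
  have hm : MonotoneOn E (Set.Icc t t0) := by
    apply monotoneOn_of_deriv_nonneg (convex_Icc _ _)
    · intro x hx
      exact (hd x (by linarith [hx.1]) hx.2).continuousAt.continuousWithinAt
    · intro x hx
      rw [interior_Icc] at hx
      exact (hd x (by linarith [hx.1]) hx.2.le).differentiableAt.differentiableWithinAt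
    · intro x hx
      rw [interior_Icc] at hx
      rw [(hd x (by linarith [hx.1]) hx.2.le).deriv]
      have ha : 0 < -x := by linarith [hx.2]
      have hb : 0 < 1 + x := by linarith [hx.1]
      have hc : 0 ≤ α ^ 2 - 1/4 := by nlinarith
      positivity
  have hfin := hm ⟨le_rfl, htt⟩ ⟨htt, le_rfl⟩ htt
  refine le_trans ?_ hfin
  have hr := hRpos t ht htt
  have hw : 0 ≤ W t := by
    have ha : 0 < -t := by linarith
    have hb : 0 < 1 + t := by linarith
    simp only [hW]; positivity
  have : 0 ≤ B t ^ 2 / R t := by positivity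
  show W t * Y t ^ 2 ≤ W t * (Y t ^ 2 + B t ^ 2 / R t)
  gcongr
  linarith

lemma jPi_basic (α : ℝ) (hα : 1 / 2 ≤ α) (n : ℕ) (hn : 1 ≤ n) (t : ℝ)
    (ht : t ∈ Set.Icc (-1:ℝ) 0) :
    jY α n t ^ 2 ≤ jcoef α n 0 ^ 2 ∧
    (-t) * (1 + t) * jY1 α n t ^ 2 ≤ (n : ℝ) * (n + α + 1) * jcoef α n 0 ^ 2 := by
  have hα0 : 0 < α := by linarith
  have hn' : (1:ℝ) ≤ n := by exact_mod_cast hn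
  have hc := jcoef_zero_ge α hα0 n
  have hlam : 0 < (n : ℝ) * (n + α + 1) := by positivity
  have h := sonin1 α ((n : ℝ) * (n + α + 1)) hα0 (jY α n) (jY1 α n) (jY2 α n)
    (jY_deriv α n) (jY1_deriv α n) (jY_ode α hα0 n) hlam.le
    (by rw [jY_neg_one α hα0, jY_zero]; nlinarith) t ht
  rw [jY_zero] at h
  have ha : 0 ≤ -t := by linarith [ht.2]
  have hb : 0 ≤ 1 + t := by linarith [ht.1]
  have e1 : 0 ≤ (-t) * (1 + t) * jY1 α n t ^ 2 := by positivity
  have e2 : 0 ≤ (n : ℝ) * (n + α + 1) * jY α n t ^ 2 := by positivity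
  constructor
  · exact le_of_mul_le_mul_left (by linarith) hlam
  · linarith

lemma jPi_one (α : ℝ) (hα : 1 / 2 ≤ α) (n : ℕ) (hn : 1 ≤ n) (l : ℝ)
    (hl : l ∈ Set.Icc (-1:ℝ) 1) : |jacobiPi α 0 n l| ≤ 1 := by
  have hc := jcoef_zero_ge α (by linarith) n
  have h := (jPi_basic α hα n hn ((l - 1) / 2)
    ⟨by linarith [hl.1], by linarith [hl.2]⟩).1
  unfold jacobiPi
  rw [jacobiP_eq, jacobiP_eq]
  have : ((1:ℝ) - 1) / 2 = 0 := by norm_num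
  rw [this, jY_zero, abs_div, div_le_one (by positivity)]
  exact sq_le_sq.mp h

set_option maxHeartbeats 1000000 in
lemma jPi_two (α : ℝ) (hα : 1 / 2 ≤ α) (n : ℕ) (hn : 1 ≤ n) (l : ℝ)
    (hl : |l| ≤ 1 - (α ^ 2 + 1) / (n : ℝ) ^ 2) :
    ((1 - |l|) / 4) ^ (α + 1/2) * jacobiPi α 0 n l ^ 2 ≤
      ((α ^ 2 + 1) / (2 * (n : ℝ) ^ 2)) ^ (α + 1/2) *
      (1 + (2 * (α + 1) ^ 2 + 4 * (α ^ 2 + 1) * (α + 2)) / ((α ^ 2 + 1) / 2)) := by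
  have hα0 : 0 < α := by linarith
  have hn' : (1:ℝ) ≤ n := by exact_mod_cast hn
  have hn0 : (0:ℝ) < n := by linarith
  have hc := jcoef_zero_ge α hα0 n
  set c := jcoef α n 0 with hcdef
  set K := α ^ 2 + 1 with hK
  have hKp : 0 < K := by positivity
  set a0 := K / (2 * (n : ℝ) ^ 2) with ha0
  have ha0p : 0 < a0 := by positivity
  have ha0n : a0 * (2 * (n:ℝ) ^ 2) = K := by rw [ha0]; field_simp
  have hKn : K / (n:ℝ) ^ 2 = 2 * a0 := by rw [ha0]; field_simp
  rw [hKn] at hl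
  have hl0 := abs_nonneg l
  have hl1 := le_abs_self l
  have hl2 := neg_abs_le l
  set t := (l - 1) / 2 with ht
  have hb0 : 1 / 2 ≤ 1 + -a0 := by linarith
  have hs := sonin2 α n hα hn' (jY α n) (jY1 α n) (jY2 α n)
    (jY_deriv α n) (jY1_deriv α n) (jY_ode α hα0 n) (-a0) (by linarith)
    (by rw [neg_neg]; nlinarith) t (by linarith) (by linarith)
  obtain ⟨g1, g2⟩ := jPi_basic α hα n hn (-a0) ⟨by linarith, by linarith⟩
  rw [neg_neg] at hs g2
  have hPi : jacobiPi α 0 n l = jY α n t / c := by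
    unfold jacobiPi
    rw [jacobiP_eq, jacobiP_eq]
    have : ((1:ℝ) - 1) / 2 = 0 := by norm_num
    rw [this, jY_zero]
  set y := jY α n (-a0)
  set z := jY1 α n (-a0)
  set b0 := 1 + -a0 with hb0d
  have hb01 : b0 ≤ 1 := by linarith
  have hR : K / 2 ≤ 4 * (n + (α + 1) / 2) ^ 2 * a0 * b0 + (1/4 - α^2) * b0 + a0 / 4 := by
    have e2 : (n:ℝ) ^ 2 ≤ (n + (α + 1) / 2) ^ 2 := by gcongr; linarith
    have e3 : (n:ℝ) ^ 2 * (a0 * b0) ≤ (n + (α + 1) / 2) ^ 2 * (a0 * b0) := by gcongr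
    have e4 : (n:ℝ) ^ 2 * (a0 * b0) = K / 2 * b0 := by rw [← ha0n]; ring
    have e5 : α ^ 2 * b0 ≤ K * b0 := by gcongr; linarith
    nlinarith
  have hB : (((α + 1/2) * b0 - a0 / 2) * y - 2 * a0 * b0 * z) ^ 2 ≤
      c ^ 2 * (2 * (α + 1) ^ 2 + 4 * K * (α + 2)) := by
    have e1 : ((α + 1/2) * b0 - a0 / 2) ^ 2 ≤ (α + 1) ^ 2 := by
      have m1 : 0 ≤ (α + 1/2) * b0 := by positivity
      have m2 : (α + 1/2) * b0 ≤ (α + 1/2) * 1 := by gcongr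
      apply sq_le_sq'
      · linarith
      · linarith
    have e2 : (((α + 1/2) * b0 - a0 / 2) * y) ^ 2 ≤ (α + 1) ^ 2 * c ^ 2 := by
      rw [mul_pow]; gcongr
    have e3 : a0 * b0 * (a0 * b0 * z ^ 2) ≤ a0 * 1 * ((n:ℝ) * (n + α + 1) * c ^ 2) := by
      gcongr
    have e4 : a0 * 1 * ((n:ℝ) * (n + α + 1) * c ^ 2) ≤ a0 * 1 * ((n:ℝ) * (n * (α + 2)) * c ^ 2) := by
      gcongr
      nlinarith
    have e5 : a0 * 1 * ((n:ℝ) * (n * (α + 2)) * c ^ 2) = K / 2 * (α + 2) * c ^ 2 := by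
      rw [← ha0n]; ring
    have e6 := sq_nonneg (((α + 1/2) * b0 - a0 / 2) * y + 2 * a0 * b0 * z)
    generalize ((α + 1/2) * b0 - a0 / 2) * y = P at *
    have e7 : (P - 2 * a0 * b0 * z) ^ 2 + (P + 2 * a0 * b0 * z) ^ 2
      = 2 * P ^ 2 + 8 * (a0 * b0 * (a0 * b0 * z ^ 2)) := by ring
    linarith
  have hW0 : b0 ^ (1/2:ℝ) ≤ 1 := Real.rpow_le_one (by linarith) hb01 (by norm_num)
  have hWt : ((1 - |l|) / 4) ^ (α + 1/2) ≤ (-t) ^ (α + 1/2) * (1 + t) ^ (1/2:ℝ) := by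
    set q := (1 - |l|) / 2 with hq
    have hq0 : 0 < q := by linarith
    have hq1 : q ≤ 1 := by linarith
    have e0 : (1 - |l|) / 4 = q * (1/2) := by rw [hq]; ring
    rw [e0, Real.mul_rpow hq0.le (by norm_num)]
    have e1 : ((1:ℝ)/2) ^ (α + 1/2) ≤ (1/2) ^ (1/2:ℝ) :=
      Real.rpow_le_rpow_of_exponent_ge (by norm_num) (by norm_num) (by linarith)
    have e2 : q ^ (α + 1/2) ≤ q ^ (1/2:ℝ) :=
      Real.rpow_le_rpow_of_exponent_ge hq0 hq1 (by linarith)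
    rcases le_total 0 l with h | h
    · rw [abs_of_nonneg h] at hq
      have e3 : -t = q := by rw [hq, ht]; ring
      have e4 : 1/2 ≤ 1 + t := by linarith
      rw [e3]
      have : ((1:ℝ)/2) ^ (1/2:ℝ) ≤ (1 + t) ^ (1/2:ℝ) := by gcongr
      gcongr
      linarith
    · rw [abs_of_nonpos h] at hq
      have e3 : 1 + t = q := by rw [hq, ht]; ring
      have e4 : 1/2 ≤ -t := by linarith
      rw [e3, mul_comm]
      gcongr
  have hcp : 0 < c ^ 2 := by positivity
  rw [hPi, div_pow, mul_div_assoc', div_le_iff₀ hcp]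
  calc ((1 - |l|) / 4) ^ (α + 1/2) * jY α n t ^ 2
      ≤ (-t) ^ (α + 1/2) * (1 + t) ^ (1/2:ℝ) * jY α n t ^ 2 := by gcongr
    _ ≤ _ := hs
    _ ≤ a0 ^ (α + 1/2) * 1 * (c ^ 2 + c ^ 2 * (2 * (α + 1) ^ 2 + 4 * K * (α + 2)) / (K / 2)) := by
        have hRp : 0 < 4 * (n + (α + 1) / 2) ^ 2 * a0 * b0 + (1/4 - α^2) * b0 + a0 / 4 := by
          linarith
        gcongr
    _ = _ := by ring

/-- Uniform bounds on the normalized Jacobi polynomials over the support of the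
orthogonality measure. -/
theorem jacobi_polynomial_uniform_bounds
    (d : ℕ) (hd : 1 ≤ d) :
    ∃ C₁ C₂ : ℝ, 0 < C₁ ∧ 0 < C₂ ∧ ∀ n : ℕ, 1 ≤ n → ∀ l : ℝ, l ∈ Set.Icc (-1 : ℝ) 1 →
      (|l| ≤ 1 - 1 / (n : ℝ) ^ 2 →
        |jacobiPi ((d : ℝ) / 2) 0 n l| ≤
          C₁ * Real.arccos |l| ^ (-(d : ℝ) / 2 - 1 / 2) * (n : ℝ) ^ (-(d : ℝ) / 2 - 1 / 2)) ∧
      (1 - 1 / (n : ℝ) ^ 2 < |l| → |jacobiPi ((d : ℝ) / 2) 0 n l| ≤ C₂) := by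
  have hd' : (1:ℝ) ≤ d := by exact_mod_cast hd
  have hexp : -(d : ℝ) / 2 - 1 / 2 = -((d:ℝ)/2 + 1/2) := by ring
  rw [hexp]
  set α : ℝ := (d:ℝ)/2 with hαd
  have hα : 1 / 2 ≤ α := by linarith
  clear_value α
  set K := α ^ 2 + 1 with hK
  have hKp : 0 < K := by positivity
  set D := 1 + (2 * (α + 1) ^ 2 + 4 * K * (α + 2)) / (K / 2) with hD
  have hα0 : 0 < α := by linarith
  have hD1 : 1 ≤ D := by
    rw [hD]; linarith [show 0 ≤ (2 * (α + 1) ^ 2 + 4 * K * (α + 2)) / (K / 2) by positivity]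
  set p := α + 1/2 with hp
  have hpp : 0 < p := by linarith
  set M := π * √K with hM
  have hMp : 0 < M := by positivity
  have hM2 : M ^ 2 = π ^ 2 * K := by rw [hM, mul_pow, Real.sq_sqrt hKp.le]
  have hMpp : 0 < M ^ p := by positivity
  refine ⟨M ^ p * D, 1, by positivity, one_pos, ?_⟩
  intro n hn l hl
  have hone := jPi_one α hα n hn l hl
  refine ⟨?_, fun _ => hone⟩
  intro hln
  have hn0 : (0:ℝ) < n := by exact_mod_cast hn
  have hlt : |l| < 1 := by
    have : 0 < 1 / (n:ℝ)^2 := by positivity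
    linarith
  set θ := Real.arccos |l| with hθ
  have hθ0 : 0 < θ := Real.arccos_pos.mpr hlt
  have hθπ : θ ≤ π := Real.arccos_le_pi _
  have hcos : Real.cos θ = |l| := Real.cos_arccos (by linarith [abs_nonneg l]) hlt.le
  have hquad : 2 / π ^ 2 * θ ^ 2 ≤ 1 - |l| := by
    have := Real.cos_le_one_sub_mul_cos_sq (x := θ) (by rw [abs_of_pos hθ0]; exact hθπ)
    rw [hcos] at this
    linarith
  have hquad' : 2 * θ ^ 2 ≤ (1 - |l|) * π ^ 2 := by
    have hπ := Real.pi_pos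
    have : 2 / π ^ 2 * θ ^ 2 = 2 * θ ^ 2 / π ^ 2 := by ring
    rw [this, div_le_iff₀ (by positivity)] at hquad
    exact hquad
  have hgoal : (n * θ) ^ p * |jacobiPi α 0 n l| ≤ M ^ p * D := by
    by_cases hcase : |l| ≤ 1 - K / (n:ℝ) ^ 2
    · have h2 := jPi_two α hα n hn l hcase
      rw [← hK, ← hD, ← hp] at h2
      have h3 : (θ ^ 2 / (2 * π ^ 2)) ^ p ≤ ((1 - |l|) / 4) ^ p := by
        have hπ := Real.pi_pos
        apply Real.rpow_le_rpow (by positivity) _ hpp.le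
        rw [div_le_div_iff₀ (by positivity) (by norm_num)]
        linarith
      have h4 : (θ ^ 2 / (2 * π ^ 2)) ^ p * jacobiPi α 0 n l ^ 2 ≤ (K / (2 * (n:ℝ) ^ 2)) ^ p * D :=
        le_trans (by gcongr) h2
      have hπ := Real.pi_pos
      have hf : 0 < (2 * π ^ 2 * n ^ 2 : ℝ) := by positivity
      have h5 : ((n * θ) ^ 2) ^ p * jacobiPi α 0 n l ^ 2 ≤ (M ^ 2) ^ p * D := by
        have e1 : ((n:ℝ) * θ) ^ 2 = (2 * π ^ 2 * n ^ 2) * (θ ^ 2 / (2 * π ^ 2)) := by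
          field_simp
        have e2 : M ^ 2 = (2 * π ^ 2 * n ^ 2) * (K / (2 * (n:ℝ) ^ 2)) := by
          rw [hM2]; field_simp
        rw [e1, e2, Real.mul_rpow hf.le (by positivity), Real.mul_rpow hf.le (by positivity),
          mul_assoc (_ ^ p), mul_assoc (_ ^ p)]
        exact mul_le_mul_of_nonneg_left h4 (by positivity)
      have e3 : ∀ x : ℝ, 0 ≤ x → (x ^ 2) ^ p = (x ^ p) ^ 2 := by
        intro x hx
        rw [← Real.rpow_natCast, ← Real.rpow_mul hx, mul_comm, Real.rpow_mul hx, Real.rpow_natCast]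
      rw [e3 _ (by positivity), e3 _ hMp.le] at h5
      refine (sq_le_sq₀ (by positivity) (by positivity)).mp ?_
      rw [mul_pow, mul_pow, sq_abs]
      refine h5.trans ?_
      gcongr
      nlinarith
    · push Not at hcase
      have h1 : (1 - |l|) * (n:ℝ) ^ 2 ≤ K := by
        rw [← le_div_iff₀ (by positivity)]; linarith
      have h2 : n * θ ≤ M := by
        refine (sq_le_sq₀ (by positivity) hMp.le).mp ?_
        rw [hM2, mul_pow]
        have a1 : (n:ℝ)^2 * (2 * θ ^ 2) ≤ (n:ℝ)^2 * ((1 - |l|) * π ^ 2) := by gcongr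
        have a2 : ((1 - |l|) * (n:ℝ) ^ 2) * π ^ 2 ≤ K * π ^ 2 := by gcongr
        have a3 : 0 ≤ (n:ℝ)^2 * θ ^ 2 := by positivity
        linarith
      calc (n * θ) ^ p * |jacobiPi α 0 n l| ≤ M ^ p * 1 := by gcongr
        _ ≤ M ^ p * D := by gcongr
  have hnθ : 0 < (n * θ) ^ p := by positivity
  rw [Real.rpow_neg hθ0.le, Real.rpow_neg hn0.le, mul_assoc, ← mul_inv, mul_comm (θ ^ p),
    ← Real.mul_rpow hn0.le hθ0.le, ← div_eq_mul_inv, le_div_iff₀ hnθ, mul_comm]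
  exact hgoal
end
end

section
/- There exists a constant C > 0 such that for every n ≥ 1, ∑_{v∈ℤ^d} x_n(v)² ≤ C n^{−d}. (The squared ℓ² norm of the Jacobi polynomial iteration is O(n^{−d}).) -/
open MeasureTheory Matrix Filter Topology Real

noncomputable section

def jp (d : ℕ) : ℕ → Polynomial ℝ
  | 0 => 1
  | 1 => Polynomial.C (aCoef0 d) * Polynomial.X + Polynomial.C (bCoef0 d)
  | (k+2) => (Polynomial.C (aCoef d (k+1)) * Polynomial.X + Polynomial.C (bCoef d (k+1))) * jp d (k+1)
      - Polynomial.C (cCoef d (k+1)) * jp d k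

def jy (d n : ℕ) (t : ℝ) : ℝ := (jp d n).eval t
def jy1 (d n : ℕ) (t : ℝ) : ℝ := (jp d n).derivative.eval t
def jy2 (d n : ℕ) (t : ℝ) : ℝ := (jp d n).derivative.derivative.eval t

lemma jy_hasDeriv (d n : ℕ) (t : ℝ) : HasDerivAt (jy d n) (jy1 d n t) t :=
  (jp d n).hasDerivAt t
lemma jy1_hasDeriv (d n : ℕ) (t : ℝ) : HasDerivAt (jy1 d n) (jy2 d n t) t :=
  (jp d n).derivative.hasDerivAt t

lemma jy_rec (d k : ℕ) (t : ℝ) : jy d (k+2) t =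
    (aCoef d (k+1) * t + bCoef d (k+1)) * jy d (k+1) t - cCoef d (k+1) * jy d k t := by
  simp [jy, jp]
lemma jy1_rec (d k : ℕ) (t : ℝ) : jy1 d (k+2) t =
    aCoef d (k+1) * jy d (k+1) t +
    (aCoef d (k+1) * t + bCoef d (k+1)) * jy1 d (k+1) t - cCoef d (k+1) * jy1 d k t := by
  simp [jy, jy1, jp]

lemma j_rel (d : ℕ) (hd : 1 ≤ d) (n : ℕ) (t : ℝ) :
    (2 * (n:ℝ) + d/2 + 2) * (1 - t^2) * jy1 d n t =
      ((n:ℝ) + d/2 + 1) * (d/2 + (2*(n:ℝ) + d/2 + 2) * t) * jy d n t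
        - 2 * ((n:ℝ) + d/2 + 1)^2 * jy d (n+1) t ∧
    (2 * (n:ℝ) + d/2 + 2) * (1 - t^2) * jy1 d (n+1) t =
      ((n:ℝ) + 1) * (d/2 - (2*(n:ℝ) + d/2 + 2) * t) * jy d (n+1) t
        + 2 * ((n:ℝ) + 1)^2 * jy d n t := by
  have hd' : (0:ℝ) < d := by exact_mod_cast hd
  induction n with
  | zero =>
    simp only [jy, jy1, jp, aCoef0, bCoef0]
    constructor
    · simp
      field_simp
      ring
    · simp
      field_simp
      ring
  | succ n ih =>
    obtain ⟨h1, h2⟩ := ih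
    have hA : (2 * (n:ℝ) + d/2 + 2) ≠ 0 := by positivity
    have e1 := jy_rec d n t
    have e2 := jy1_rec d n t
    have h0 : (0:ℝ) ≤ n := Nat.cast_nonneg n
    generalize jy d n t = y0 at *
    generalize jy d (n+1) t = y1 at *
    generalize jy d (n+1+1) t = y2 at *
    generalize jy1 d n t = z0 at *
    generalize jy1 d (n+1) t = z1 at *
    generalize jy1 d (n+1+1) t = z2 at *
    have k1 : (1 - t^2) * z0 = (((n:ℝ) + d/2 + 1) * (d/2 + (2*(n:ℝ) + d/2 + 2) * t) * y0
        - 2 * ((n:ℝ) + d/2 + 1)^2 * y1) / (2 * (n:ℝ) + d/2 + 2) := by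
      rw [eq_div_iff hA, ← h1]; ring
    have k2 : (1 - t^2) * z1 = (((n:ℝ) + 1) * (d/2 - (2*(n:ℝ) + d/2 + 2) * t) * y1
        + 2 * ((n:ℝ) + 1)^2 * y0) / (2 * (n:ℝ) + d/2 + 2) := by
      rw [eq_div_iff hA, ← h2]; ring
    simp only [aCoef, bCoef, cCoef] at e1 e2
    push_cast at *
    constructor
    · rw [mul_assoc, k2, e1]
      field_simp
      ring
    · have : (1 - t^2) * z2 = (2 * ((n:ℝ)+1) + (d:ℝ)/2 + 1) * (2 * ((n:ℝ)+1) + (d:ℝ)/2 + 2) / (2 * (((n:ℝ)+1) + 1 + (d:ℝ)/2)^2) * (1-t^2) * y1 + ((2 * ((n:ℝ)+1) + (d:ℝ)/2 + 1) * (2 * ((n:ℝ)+1) + (d:ℝ)/2 + 2) / (2 * (((n:ℝ)+1) + 1 + (d:ℝ)/2)^2) * t + (d : ℝ)^2 * (2 * ((n:ℝ)+1) + (d : ℝ)/2 + 1) / (8 * (((n:ℝ)+1) + 1 + (d : ℝ)/2)^2 * (2 * ((n:ℝ)+1) + (d : ℝ)/2))) * ((1-t^2)*z1) - ((n:ℝ)+1)^2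 * (2 * ((n:ℝ)+1) + (d : ℝ)/2 + 2) / ((((n:ℝ)+1) + 1 + (d : ℝ)/2)^2 * (2 * ((n:ℝ)+1) + (d : ℝ)/2)) * ((1-t^2) * z0) := by
        rw [e2]; ring
      rw [mul_assoc, this, k1, k2, e1]
      field_simp
      ring

lemma j_ode (d : ℕ) (hd : 1 ≤ d) (n : ℕ) (t : ℝ) (ht : 1 - t^2 ≠ 0) :
    (1 - t^2) * jy2 d (n+1) t = (d/2 + (d/2 + 2) * t) * jy1 d (n+1) t
      - ((n:ℝ)+1) * ((n:ℝ) + 1 + d/2 + 1) * jy d (n+1) t := by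
  have hA : (2 * (n:ℝ) + d/2 + 2) ≠ 0 := by positivity
  have hL : HasDerivAt (fun t => (2 * (n:ℝ) + d/2 + 2) * (1 - t^2) * jy1 d (n+1) t)
      ((2 * (n:ℝ) + d/2 + 2) * (-(2*t)) * jy1 d (n+1) t
        + (2 * (n:ℝ) + d/2 + 2) * (1 - t^2) * jy2 d (n+1) t) t := by
    refine HasDerivAt.mul ?_ (jy1_hasDeriv d (n+1) t)
    refine HasDerivAt.const_mul _ ?_
    simpa using ((hasDerivAt_id t).pow 2).const_sub 1
  have hR : HasDerivAt (fun t => ((n:ℝ) + 1) * (d/2 - (2*(n:ℝ) + d/2 + 2) * t) * jy d (n+1) t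
        + 2 * ((n:ℝ) + 1)^2 * jy d n t)
      ((((n:ℝ) + 1) * (-(2*(n:ℝ) + d/2 + 2)) * jy d (n+1) t
        + ((n:ℝ) + 1) * (d/2 - (2*(n:ℝ) + d/2 + 2) * t) * jy1 d (n+1) t)
        + 2 * ((n:ℝ) + 1)^2 * jy1 d n t) t := by
    refine HasDerivAt.add (HasDerivAt.mul ?_ (jy_hasDeriv d (n+1) t)) ((jy_hasDeriv d n t).const_mul _)
    refine HasDerivAt.const_mul _ ?_
    simpa using ((hasDerivAt_id t).const_mul (2*(n:ℝ) + d/2 + 2)).const_sub ((d:ℝ)/2)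
  have hfun : (fun t => (2 * (n:ℝ) + d/2 + 2) * (1 - t^2) * jy1 d (n+1) t) = 
     (fun t => ((n:ℝ) + 1) * (d/2 - (2*(n:ℝ) + d/2 + 2) * t) * jy d (n+1) t
        + 2 * ((n:ℝ) + 1)^2 * jy d n t) := by
    funext s; exact (j_rel d hd n s).2
  rw [hfun] at hL
  have key := hL.unique hR
  obtain ⟨r1, r2⟩ := j_rel d hd n t
  apply mul_left_cancel₀ (mul_ne_zero hA (mul_ne_zero hA ht))
  linear_combination (2 * (n:ℝ) + d/2 + 2) * (1 - t^2) * key + 2 * ((n:ℝ) + 1)^2 * r1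
    + (((n:ℝ)+1)*(d/2 - (2 * (n:ℝ) + d/2 + 2)*t) - (2 * (n:ℝ) + d/2 + 2)*(d/2 + d/2*t)) * r2

lemma jy_one (d : ℕ) (hd : 1 ≤ d) (n : ℕ) : jy d n 1 = 1 := by
  induction n with
  | zero => simp [jy, jp]
  | succ n ih =>
    have h := (j_rel d hd n 1).1
    rw [ih] at h
    have hA : ((n:ℝ) + d/2 + 1) ≠ 0 := by positivity
    have : 2 * ((n:ℝ) + d/2 + 1)^2 * (jy d (n+1) 1 - 1) = 0 := by linear_combination h
    have := (mul_eq_zero.mp this).resolve_left (by positivity)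
    linarith
lemma sonin1_s10 (d : ℕ) (hd : 1 ≤ d) (n : ℕ) (t : ℝ) (ht : t ∈ Set.Icc (0:ℝ) 1) :
    (jy d (n+1) t)^2 + (1 - t^2) * (jy1 d (n+1) t)^2 / (((n:ℝ)+1) * ((n:ℝ) + 1 + d/2 + 1)) ≤ 1 := by
  set N : ℝ := ((n:ℝ)+1) * ((n:ℝ) + 1 + d/2 + 1) with hN
  have hNpos : 0 < N := by positivity
  let f : ℝ → ℝ := fun t => (jy d (n+1) t)^2 + (1 - t^2) * (jy1 d (n+1) t)^2 / N
  have hder : ∀ s, HasDerivAt f (2 * jy d (n+1) s * jy1 d (n+1) s +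
      (-(2*s) * (jy1 d (n+1) s)^2 + (1-s^2) * (2 * jy1 d (n+1) s * jy2 d (n+1) s)) / N) s := by
    intro s
    have h1 := (jy_hasDeriv d (n+1) s).pow 2
    have h2 := (jy1_hasDeriv d (n+1) s).pow 2
    have h3 : HasDerivAt (fun t : ℝ => 1 - t^2) (-(2*s)) s := by
      simpa using ((hasDerivAt_id s).pow 2).const_sub 1
    refine (h1.add ((h3.mul h2).div_const N)).congr_deriv ?_
    simp
  have hm : MonotoneOn f (Set.Icc 0 1) := by
    apply monotoneOn_of_deriv_nonneg (convex_Icc 0 1)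
    · exact fun s _ => (hder s).continuousAt.continuousWithinAt
    · exact fun s _ => (hder s).differentiableAt.differentiableWithinAt
    · intro s hs
      rw [interior_Icc] at hs
      rw [(hder s).deriv]
      have hs2 : 1 - s^2 ≠ 0 := by nlinarith [hs.1, hs.2]
      have ode := j_ode d hd n s hs2
      rw [← hN] at ode
      have : 2 * jy d (n+1) s * jy1 d (n+1) s +
        (-(2*s) * (jy1 d (n+1) s)^2 + (1-s^2) * (2 * jy1 d (n+1) s * jy2 d (n+1) s)) / N
        = 2 * (d/2 + (d/2+1) * s) * (jy1 d (n+1) s)^2 / N := by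
        field_simp
        linear_combination (2 * jy1 d (n+1) s) * ode
      rw [this]
      have := hs.1
      positivity
  have := hm ht (Set.right_mem_Icc.mpr zero_le_one) ht.2
  have h1 : f 1 = 1 := by simp [f, jy_one d hd]
  rw [h1] at this
  exact this

/-- the Sonin function -/
def jq (d n : ℕ) (t : ℝ) : ℝ := (1/4 - ((d:ℝ)/2)^2) * (1+t)/2 + (1-t)/8 + ((n:ℝ) + (d/2+1)/2)^2 * (1-t^2)
def jz (d n : ℕ) (t : ℝ) : ℝ := (1-t^2) * jy1 d n t - (d/2 + (d/2+1)*t)/2 * jy d n t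
def jW (d : ℕ) (t : ℝ) : ℝ := √(1-t)^(d+1) * √(1+t)
def jf (d n : ℕ) (t : ℝ) : ℝ := jW d t * ((jy d n t)^2 + (jz d n t)^2 / jq d n t)

lemma jW_hasDeriv (d : ℕ) (t : ℝ) (h1 : -1 < t) (h2 : t < 1) :
    HasDerivAt (jW d) (-(d/2 + (d/2+1)*t) / (1-t^2) * jW d t) t := by
  have a1 : HasDerivAt (fun t : ℝ => 1 - t) (-1) t := by
    simpa using (hasDerivAt_id t).const_sub 1
  have a2 : HasDerivAt (fun t : ℝ => 1 + t) 1 t := by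
    simpa using (hasDerivAt_id t).const_add 1
  have b1 := (a1.sqrt (by linarith)).pow (d+1)
  have b2 := a2.sqrt (by linarith)
  refine (b1.mul b2).congr_deriv ?_
  have p1 : 0 < √(1-t) := Real.sqrt_pos.mpr (by linarith)
  have p2 : 0 < √(1+t) := Real.sqrt_pos.mpr (by linarith)
  have q1 : √(1-t)^2 = 1 - t := Real.sq_sqrt (by linarith)
  have q2 : √(1+t)^2 = 1 + t := Real.sq_sqrt (by linarith)
  have e : 1 - t^2 = √(1-t)^2 * √(1+t)^2 := by rw [q1, q2]; ring
  rw [jW, e]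
  simp only [Pi.pow_apply, Nat.add_sub_cancel]
  push_cast
  field_simp
  rw [q2]
  linear_combination (√(1-t)^(d+1)) * q1

lemma jf_hasDeriv (d : ℕ) (hd : 1 ≤ d) (n : ℕ) (t : ℝ) (h1 : -1 < t) (h2 : t < 1)
    (hq : 0 < jq d (n+1) t) :
    HasDerivAt (jf d (n+1)) (jW d t * (jz d (n+1) t)^2 *
      ((((d:ℝ)/2)^2 - 1/4) * (1+t)^2/2 + (1-t)^2/8) / ((jq d (n+1) t)^2 * (1-t^2))) t := by
  have hs : 0 < 1 - t^2 := by nlinarith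
  have ode := j_ode d hd n t hs.ne'
  have a3 : HasDerivAt (fun t : ℝ => 1 - t^2) (-(2*t)) t := by
    simpa using ((hasDerivAt_id t).pow 2).const_sub 1
  have a1 : HasDerivAt (fun t : ℝ => 1 - t) (-1) t := by
    simpa using (hasDerivAt_id t).const_sub 1
  have a2 : HasDerivAt (fun t : ℝ => 1 + t) 1 t := by
    simpa using (hasDerivAt_id t).const_add 1
  have a4 : HasDerivAt (fun t : ℝ => ((d:ℝ)/2 + (d/2+1)*t)/2) (((d:ℝ)/2+1)/2) t := by
    simpa using (((hasDerivAt_id t).const_mul ((d:ℝ)/2+1)).const_add ((d:ℝ)/2)).div_const 2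
  have hz : HasDerivAt (jz d (n+1)) _ t :=
    (a3.mul (jy1_hasDeriv d (n+1) t)).sub (a4.mul (jy_hasDeriv d (n+1) t))
  have hqd : HasDerivAt (jq d (n+1)) _ t :=
    (((a2.const_mul (1/4 - ((d:ℝ)/2)^2)).div_const 2).add (a1.div_const 8)).add
      (a3.const_mul ((((n+1:ℕ):ℝ) + (d/2+1)/2)^2))
  have hf := (jW_hasDeriv d t h1 h2).mul
    (((jy_hasDeriv d (n+1) t).pow 2).add ((hz.pow 2).div hqd hq.ne'))
  refine hf.congr_deriv ?_
  simp only [Pi.add_apply, Pi.pow_apply, Pi.div_apply]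
  generalize jW d t = w at *
  have hzz : jy1 d (n+1) t = (jz d (n+1) t + (d/2 + (d/2+1)*t)/2 * jy d (n+1) t) / (1-t^2) := by
    rw [jz]; field_simp; ring
  rw [ode]
  have hQ : ((n:ℝ) + 1 + (d/2+1)/2)^2 = (jq d (n+1) t - (1/4 - ((d:ℝ)/2)^2) * (1+t)/2 - (1-t)/8) / (1-t^2) := by
    rw [jq]; push_cast; field_simp; ring
  have hNN : ((n:ℝ)+1) * ((n:ℝ) + 1 + d/2 + 1) = ((n:ℝ) + 1 + (d/2+1)/2)^2 - ((d/2+1)/2)^2 := by ring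
  rw [hNN]
  push_cast
  rw [hQ, hzz]
  generalize jz d (n+1) t = z at *
  generalize jy d (n+1) t = y at *
  generalize jq d (n+1) t = q at *
  have e1 : 1 - t^2 = (1-t)*(1+t) := by ring
  have g1 : 1 - t ≠ 0 := by linarith
  have g2 : 1 + t ≠ 0 := by linarith
  rw [e1]
  field_simp
  ring

lemma jq_lower (d : ℕ) (hd : 1 ≤ d) (n : ℕ) (hn : 1 ≤ n) (t : ℝ) (h1 : -1 < t)
    (h2 : ((d:ℝ)/2)^2 ≤ (n:ℝ)^2 * (1 - t)) : (1-t^2) * (n:ℝ)^2 / 2 ≤ jq d n t := by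
  have hn' : (0:ℝ) < n := by exact_mod_cast hn
  have hd' : (0:ℝ) < d := by exact_mod_cast hd
  have ht : 0 < 1 - t := by
    by_contra hc
    have : 0 < ((d:ℝ)/2)^2 := by positivity
    nlinarith [sq_nonneg (n:ℝ)]
  have e : (n:ℝ)^2 ≤ ((n:ℝ) + (d/2+1)/2)^2 := by
    apply pow_le_pow_left₀ hn'.le; linarith
  have hs : 0 < 1 - t^2 := by nlinarith
  have k1 := mul_le_mul_of_nonneg_right e hs.le
  have k2 := mul_le_mul_of_nonneg_right h2 (by linarith : 0 ≤ 1 + t)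
  rw [jq]
  nlinarith

lemma jq_pos (d : ℕ) (hd : 1 ≤ d) (n : ℕ) (hn : 1 ≤ n) (t : ℝ) (h1 : -1 < t) 
    (h2 : ((d:ℝ)/2)^2 ≤ (n:ℝ)^2 * (1 - t)) : 0 < jq d n t := by
  have hn' : (0:ℝ) < n := by exact_mod_cast hn
  have hd' : (0:ℝ) < d := by exact_mod_cast hd
  have ht : 0 < 1 - t := by
    by_contra hc
    have : 0 < ((d:ℝ)/2)^2 := by positivity
    nlinarith [sq_nonneg (n:ℝ)]
  refine lt_of_lt_of_le ?_ (jq_lower d hd n hn t h1 h2)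
  have hs : 0 < 1 - t^2 := by nlinarith
  positivity

lemma jf_mono (d : ℕ) (hd : 1 ≤ d) (n : ℕ) (t s : ℝ) (h1 : -1 < t) (hts : t ≤ s)
    (h2 : ((d:ℝ)/2)^2 ≤ ((n+1:ℕ):ℝ)^2 * (1 - s)) : jf d (n+1) t ≤ jf d (n+1) s := by
  have hd' : (1:ℝ) ≤ d := by exact_mod_cast hd
  have hs1 : s < 1 := by
    by_contra hc
    have : 0 < ((d:ℝ)/2)^2 := by positivity
    nlinarith [sq_nonneg ((n+1:ℕ):ℝ)]
  have hder : ∀ u ∈ Set.Icc t s, HasDerivAt (jf d (n+1)) (jW d u * (jz d (n+1) u)^2 *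
      ((((d:ℝ)/2)^2 - 1/4) * (1+u)^2/2 + (1-u)^2/8) / ((jq d (n+1) u)^2 * (1-u^2))) u := by
    intro u hu
    apply jf_hasDeriv d hd n u (by linarith [hu.1]) (by linarith [hu.2])
    apply jq_pos d hd (n+1) (by omega) u (by linarith [hu.1])
    have := hu.2
    refine h2.trans (mul_le_mul_of_nonneg_left (by linarith) (by positivity))
  have hm : MonotoneOn (jf d (n+1)) (Set.Icc t s) := by
    apply monotoneOn_of_deriv_nonneg (convex_Icc t s)
    · exact fun u hu => (hder u hu).continuousAt.continuousWithinAt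
    · exact fun u hu => (hder u (interior_subset hu)).differentiableAt.differentiableWithinAt
    · intro u hu
      have hu := interior_subset hu
      rw [(hder u hu).deriv]
      have q1 : 0 < 1 - u^2 := by nlinarith [hu.1, hu.2]
      have q2 : 0 ≤ ((d:ℝ)/2)^2 - 1/4 := by nlinarith
      have q3 : 0 ≤ jW d u := by unfold jW; positivity
      positivity
  exact hm (Set.left_mem_Icc.mpr hts) (Set.right_mem_Icc.mpr hts) hts

set_option maxHeartbeats 2000000 in
lemma jbound (d : ℕ) (hd : 1 ≤ d) (ε : ℝ) (hε : 0 < ε) : ∃ C : ℝ, 0 < C ∧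
    ∀ n : ℕ, d ≤ n → ∀ t : ℝ, -1 + ε ≤ t → t ≤ 1 →
      (jy d n t)^2 * (1 + n * √(1-t))^(d+1) ≤ C := by
  have hd' : (1:ℝ) ≤ d := by exact_mod_cast hd
  obtain ⟨a, ha⟩ : ∃ a : ℝ, a = (d:ℝ)/2 := ⟨_, rfl⟩
  have ha0 : 1/2 ≤ a := by rw [ha]; linarith
  have hap : 0 < a := by linarith
  set B : ℝ := 1 + (12*a^2 + (2*a+1)^2/2) / (a^2/2) with hB
  have hBp : 0 < B := by positivity
  have hsε : 0 < √ε := Real.sqrt_pos.mpr hε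
  refine ⟨(1+a)^(d+1) + 3^(d+1) * (a^(d+1) * 2 * B / √ε), by positivity, ?_⟩
  intro n hn t ht1 ht2
  obtain ⟨m, rfl⟩ : ∃ m, n = m + 1 := ⟨n - 1, by omega⟩
  obtain ⟨N, hN⟩ : ∃ N : ℝ, N = ((m+1:ℕ):ℝ) := ⟨_, rfl⟩
  have hNd : 2 * a ≤ N := by rw [hN, ha]; have : (d:ℝ) ≤ ((m+1:ℕ):ℝ) := by exact_mod_cast hn
                             linarith
  have hN1 : 1 ≤ N := by linarith
  have hNp : 0 < N := by linarith
  have hx0p : a/N ≤ 1/2 := by rw [div_le_iff₀ hNp]; linarith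
  have hx0pp : 0 < a/N := by positivity
  obtain ⟨x0, hx0⟩ : ∃ x0 : ℝ, x0 = 1 - (a/N)^2 := ⟨_, rfl⟩
  have hx00 : 0 ≤ x0 := by rw [hx0]; nlinarith
  have hx01 : x0 < 1 := by rw [hx0]; nlinarith
  rw [← hN]
  have hsq : 0 ≤ √(1-t) := Real.sqrt_nonneg _
  rcases le_or_gt x0 t with hc | hc
  · have h1 := sonin1_s10 d hd m t ⟨hx00.trans hc, ht2⟩
    have h2 : 0 ≤ (1 - t^2) * (jy1 d (m+1) t)^2 / (((m:ℝ)+1) * ((m:ℝ) + 1 + d/2 + 1)) := by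
      have : 0 ≤ 1 - t^2 := by nlinarith
      positivity
    have h3 : √(1-t) ≤ a/N := by
      rw [Real.sqrt_le_left hx0pp.le]; rw [hx0] at hc; linarith
    have h4 : N * √(1-t) ≤ a := by
      rw [le_div_iff₀ hNp] at h3; linarith
    calc (jy d (m+1) t)^2 * (1 + N * √(1-t))^(d+1) ≤ 1 * (1+a)^(d+1) := by
          gcongr
          linarith
      _ ≤ _ := by
          rw [one_mul]
          have : 0 ≤ 3^(d+1) * (a^(d+1) * 2 * B / √ε) := by positivity
          linarith
  · have hcond : ((d:ℝ)/2)^2 = ((m+1:ℕ):ℝ)^2 * (1 - x0) := by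
      rw [← hN, ← ha, hx0]; field_simp; ring
    have hmono := jf_mono d hd m t x0 (by linarith) hc.le hcond.le
    have hql := jq_lower d hd (m+1) (by omega) x0 (by linarith) hcond.le
    rw [← hN] at hql
    have hql2 : a^2/2 ≤ jq d (m+1) x0 := by
      refine le_trans ?_ hql
      have : a^2 = (1-x0) * N^2 := by rw [hx0]; field_simp; ring
      rw [this]
      have : (1-x0) ≤ 1 - x0^2 := by nlinarith
      gcongr
    have hson := sonin1_s10 d hd m x0 ⟨hx00, hx01.le⟩
    have hs0 : 0 < 1 - x0^2 := by nlinarith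
    have hD : ((m:ℝ)+1) * ((m:ℝ) + 1 + d/2 + 1) ≤ 3 * N^2 := by
      have : (m:ℝ)+1 = N := by rw [hN]; push_cast; ring
      rw [this, ← ha]
      nlinarith
    have hDp : 0 < ((m:ℝ)+1) * ((m:ℝ) + 1 + d/2 + 1) := by positivity
    set D := ((m:ℝ)+1) * ((m:ℝ) + 1 + d/2 + 1)
    have hy : (jy d (m+1) x0)^2 ≤ 1 := by
      have : 0 ≤ (1 - x0^2) * (jy1 d (m+1) x0)^2 / D := by positivity
      linarith
    have hy1 : (1 - x0^2) * (jy1 d (m+1) x0)^2 ≤ 3 * N^2 := by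
      have : (1 - x0^2) * (jy1 d (m+1) x0)^2 / D ≤ 1 := by
        linarith [sq_nonneg (jy d (m+1) x0)]
      rw [div_le_one hDp] at this
      linarith
    have hy2 : ((1 - x0^2) * jy1 d (m+1) x0)^2 ≤ 6 * a^2 := by
      have e1 : 1 - x0^2 ≤ 2 * (a/N)^2 := by rw [hx0]; nlinarith
      calc ((1 - x0^2) * jy1 d (m+1) x0)^2 = (1 - x0^2) * ((1 - x0^2) * (jy1 d (m+1) x0)^2) := by ring
        _ ≤ (2 * (a/N)^2) * (3 * N^2) := by gcongr
        _ = 6 * a^2 := by field_simp; ring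
    have hz : (jz d (m+1) x0)^2 ≤ 12*a^2 + (2*a+1)^2/2 := by
      rw [jz, ← ha]
      set p := (1 - x0^2) * jy1 d (m+1) x0
      have e1 : ((a + (a+1)*x0)/2 * jy d (m+1) x0)^2 ≤ ((2*a+1)/2)^2 := by
        rw [mul_pow]
        have : ((a + (a+1)*x0)/2)^2 ≤ ((2*a+1)/2)^2 := by
          apply pow_le_pow_left₀ (by positivity)
          nlinarith
        nlinarith [sq_nonneg (jy d (m+1) x0), sq_nonneg ((2*a+1)/2)]
      set r := (a + (a+1)*x0)/2 * jy d (m+1) x0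
      nlinarith [sq_nonneg (p + r)]
    have hW0 : jW d x0 ≤ (a/N)^(d+1) * 2 := by
      rw [jW]
      have e1 : √(1-x0) = a/N := by
        rw [hx0, show 1 - (1 - (a/N)^2) = (a/N)^2 by ring, Real.sqrt_sq hx0pp.le]
      have e2 : √(1+x0) ≤ 2 := by
        rw [Real.sqrt_le_left (by norm_num)]; linarith
      rw [e1]; gcongr
    have hf0 : jf d (m+1) x0 ≤ (a/N)^(d+1) * 2 * B := by
      rw [jf]
      have : (jz d (m+1) x0)^2 / jq d (m+1) x0 ≤ (12*a^2 + (2*a+1)^2/2) / (a^2/2) := by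
        gcongr
      have hq0 : 0 < jq d (m+1) x0 := lt_of_lt_of_le (by positivity) hql2
      refine mul_le_mul hW0 (by linarith) (by positivity) (by positivity)
    have hqt : 0 < jq d (m+1) t := by
      apply jq_pos d hd (m+1) (by omega) t (by linarith)
      rw [hcond]
      have := hc.le
      gcongr
    have hft : √(1-t)^(d+1) * √ε * (jy d (m+1) t)^2 ≤ jf d (m+1) t := by
      rw [jf, jW]
      have : √ε ≤ √(1+t) := Real.sqrt_le_sqrt (by linarith)
      have h0 : 0 ≤ (jz d (m+1) t)^2 / jq d (m+1) t := by positivity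
      gcongr
      linarith
    have hfin := hft.trans (hmono.trans hf0)
    have hsa : a ≤ N * √(1-t) := by
      have : a/N ≤ √(1-t) := by
        apply Real.le_sqrt_of_sq_le; rw [hx0] at hc; linarith
      rw [div_le_iff₀ hNp] at this; linarith
    have h3 : 1 + N * √(1-t) ≤ 3 * (N * √(1-t)) := by linarith
    have h5 : (N * √(1-t))^(d+1) * (jy d (m+1) t)^2 ≤ a^(d+1) * 2 * B / √ε := by
      rw [le_div_iff₀ hsε]
      calc (N * √(1-t))^(d+1) * (jy d (m+1) t)^2 * √ε 
          = N^(d+1) * (√(1-t)^(d+1) * √ε * (jy d (m+1) t)^2) := by rw [mul_pow]; ring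
        _ ≤ N^(d+1) * ((a/N)^(d+1) * 2 * B) := by gcongr
        _ = _ := by rw [div_pow]; field_simp
    calc (jy d (m+1) t)^2 * (1 + N * √(1-t))^(d+1) ≤ (jy d (m+1) t)^2 * (3 * (N * √(1-t)))^(d+1) := by
          gcongr
      _ = 3^(d+1) * ((N * √(1-t))^(d+1) * (jy d (m+1) t)^2) := by rw [mul_pow 3]; ring
      _ ≤ 3^(d+1) * (a^(d+1) * 2 * B / √ε) := by gcongr
      _ ≤ _ := by
          have : 0 ≤ (1+a)^(d+1) := by positivity
          linarith

def ech {d : ℕ} (ξ : Fin d → ℝ) (v : Fin d → ℤ) : ℂ :=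
  Complex.exp (Complex.I * ((∑ i, ξ i * (v i : ℝ) : ℝ) : ℂ))

lemma ech_zero {d : ℕ} (ξ : Fin d → ℝ) : ech ξ 0 = 1 := by simp [ech]
lemma ech_add {d : ℕ} (ξ : Fin d → ℝ) (v w : Fin d → ℤ) : ech ξ (v + w) = ech ξ v * ech ξ w := by
  rw [ech, ech, ech, ← Complex.exp_add, ← mul_add, ← Complex.ofReal_add, ← Finset.sum_add_distrib]
  congr 4
  funext i
  simp only [Pi.add_apply]; push_cast; ring
lemma ech_conj {d : ℕ} (ξ : Fin d → ℝ) (v : Fin d → ℤ) : (starRingEnd ℂ) (ech ξ v) = ech ξ (-v) := by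
  rw [ech, ech, ← Complex.exp_conj]
  simp [Complex.conj_ofReal]
lemma ech_cont {d : ℕ} (v : Fin d → ℤ) : Continuous (fun ξ : Fin d → ℝ => ech ξ v) := by
  unfold ech; fun_prop

def echHom {d : ℕ} (ξ : Fin d → ℝ) : Multiplicative (Fin d → ℤ) →* ℂ where
  toFun v := ech ξ v.toAdd
  map_one' := ech_zero ξ
  map_mul' v w := ech_add ξ v.toAdd w.toAdd

def FT {d : ℕ} (ξ : Fin d → ℝ) : AddMonoidAlgebra ℝ (Fin d → ℤ) →ₐ[ℝ] ℂ :=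
  AddMonoidAlgebra.lift ℝ ℂ (Fin d → ℤ) (echHom ξ)

lemma FT_apply {d : ℕ} (ξ : Fin d → ℝ) (A : AddMonoidAlgebra ℝ (Fin d → ℤ)) :
    FT ξ A = ∑ v ∈ A.coeff.support, (A.coeff v : ℂ) * ech ξ v := by
  rw [FT, AddMonoidAlgebra.lift_apply, Finsupp.sum]
  simp [echHom]

def bx (d : ℕ) : Set (Fin d → ℝ) := Set.univ.pi fun _ => Set.Icc (-π) π

lemma bx_compact (d : ℕ) : IsCompact (bx d) := isCompact_univ_pi fun _ => isCompact_Icc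

lemma int1 (k : ℤ) : ∫ t in Set.Icc (-π) π, Complex.exp (Complex.I * ((t * (k:ℝ) : ℝ):ℂ)) =
    if k = 0 then 2 * (π:ℂ) else 0 := by
  rw [integral_Icc_eq_integral_Ioc, ← intervalIntegral.integral_of_le (by linarith [Real.pi_pos])]
  split_ifs with h
  · subst h; simp; ring
  · have hc : Complex.I * (k:ℂ) ≠ 0 := by simp [h]
    have : (fun t : ℝ => Complex.exp (Complex.I * ((t * (k:ℝ) : ℝ):ℂ))) =
        fun t : ℝ => Complex.exp ((Complex.I * (k:ℂ)) * (t:ℂ)) := by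
      funext t; congr 1; push_cast; ring
    rw [this, integral_exp_mul_complex hc]
    have e : Complex.exp (Complex.I * (k:ℂ) * ((π:ℝ):ℂ)) = Complex.exp (Complex.I * (k:ℂ) * ((-π:ℝ):ℂ)) := by
      rw [Complex.exp_eq_exp_iff_exists_int]
      exact ⟨k, by push_cast; ring⟩
    rw [e]; simp

lemma intd {d : ℕ} (v : Fin d → ℤ) : ∫ ξ in bx d, ech ξ v = if v = 0 then (2 * (π:ℂ))^d else 0 := by
  have : (fun ξ : Fin d → ℝ => ech ξ v) = fun ξ => ∏ i, Complex.exp (Complex.I * ((ξ i * (v i:ℝ) : ℝ):ℂ)) := by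
    funext ξ
    rw [ech, ← Complex.exp_sum]
    congr 1
    push_cast
    rw [Finset.mul_sum]
  rw [this, bx, volume_pi, Measure.restrict_pi_pi, 
    integral_fintype_prod_eq_prod (f := fun i t => Complex.exp (Complex.I * ((t * (v i:ℝ) : ℝ):ℂ)))]
  simp_rw [int1]
  split_ifs with h
  · subst h; simp
  · obtain ⟨i, hi⟩ := Function.ne_iff.mp h
    exact Finset.prod_eq_zero (Finset.mem_univ i) (by simpa using hi)

lemma parseval {d : ℕ} (A : AddMonoidAlgebra ℝ (Fin d → ℤ)) :
    ∫ ξ in bx d, ‖FT ξ A‖^2 = (2*π)^d * ∑ v ∈ A.coeff.support, (A.coeff v)^2 := by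
  have key : ∀ ξ : Fin d → ℝ, ((‖FT ξ A‖^2 : ℝ) : ℂ) = ∑ v ∈ A.coeff.support, ∑ w ∈ A.coeff.support,
      (A.coeff v : ℂ) * (A.coeff w : ℂ) * ech ξ (v - w) := by
    intro ξ
    push_cast
    rw [← Complex.mul_conj', FT_apply, map_sum, Finset.sum_mul_sum]
    refine Finset.sum_congr rfl fun v _ => Finset.sum_congr rfl fun w _ => ?_
    rw [map_mul, ech_conj, sub_eq_add_neg, ech_add, Complex.conj_ofReal]; ring
  have hint : ∀ (c : ℂ) (v : Fin d → ℤ), IntegrableOn (fun ξ : Fin d → ℝ => c * ech ξ v) (bx d) := by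
    intro c v
    exact (continuous_const.mul (ech_cont v)).continuousOn.integrableOn_compact (bx_compact d)
  have : ((∫ ξ in bx d, ‖FT ξ A‖^2 : ℝ) : ℂ) = (((2*π)^d * ∑ v ∈ A.coeff.support, (A.coeff v)^2 : ℝ) : ℂ) := by
    rw [← integral_complex_ofReal]
    simp_rw [key]
    rw [integral_finsetSum _ (fun v _ => integrable_finsetSum _ (fun w _ => hint _ _))]
    push_cast
    rw [Finset.mul_sum]
    refine Finset.sum_congr rfl fun v hv => ?_
    rw [integral_finsetSum _ (fun w _ => hint _ _)]
    simp_rw [integral_const_mul, intd]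
    rw [Finset.sum_eq_single v]
    · simp; ring
    · intro w _ hw
      rw [if_neg (by rw [sub_eq_zero]; exact fun h => hw h.symm)]; simp
    · intro h; exact absurd hv h
  exact_mod_cast this

def Wa {d : ℕ} (ω : (Fin d → ℤ) → ℝ) (hfin : (Function.support ω).Finite) :
    AddMonoidAlgebra ℝ (Fin d → ℤ) := AddMonoidAlgebra.ofCoeff (Finsupp.ofSupportFinite ω hfin)

lemma Wa_mul {d : ℕ} (ω : (Fin d → ℤ) → ℝ) (hfin : (Function.support ω).Finite)
    (A : AddMonoidAlgebra ℝ (Fin d → ℤ)) (v : Fin d → ℤ) :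
    (Wa ω hfin * A).coeff v = latticeConv ω A.coeff v := by
  classical
  rw [latticeConv, tsum_eq_sum (s := A.coeff.support), AddMonoidAlgebra.coeff_mul, Finsupp.sum_comm, Finsupp.sum]
  · refine Finset.sum_congr rfl fun η _ => ?_
    rw [Finsupp.sum]
    simp_rw [← eq_sub_iff_add_eq]
    rw [Finset.sum_ite_eq']
    split_ifs with h
    · rfl
    · have : (Wa ω hfin).coeff (v - η) = 0 := Finsupp.notMem_support_iff.mp h
      have : ω (v - η) = 0 := this
      rw [this, zero_mul]
  · intro η hη
    rw [Finsupp.notMem_support_iff.mp hη, mul_zero]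

lemma X_coeff {d : ℕ} (ω : (Fin d → ℤ) → ℝ) (hfin : (Function.support ω).Finite)
    (x : ℕ → (Fin d → ℤ) → ℝ)
    (hx0 : ∀ v, x 0 v = if v = 0 then 1 else 0)
    (hx1 : ∀ v, x 1 v = aCoef0 d * latticeConv ω (x 0) v + bCoef0 d * x 0 v)
    (hrec : ∀ n, 1 ≤ n → ∀ v,
      x (n + 1) v = aCoef d n * latticeConv ω (x n) v + bCoef d n * x n v - cCoef d n * x (n - 1) v)
    (n : ℕ) : (⇑(Polynomial.aeval (Wa ω hfin) (jp d n)).coeff = x n) ∧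
      (⇑(Polynomial.aeval (Wa ω hfin) (jp d (n+1))).coeff = x (n+1)) := by
  have h0 : ⇑(Polynomial.aeval (Wa ω hfin) (jp d 0)).coeff = x 0 := by
    funext v
    rw [hx0, jp, map_one, AddMonoidAlgebra.one_def]
    simp [Finsupp.single_apply, eq_comm]
  induction n with
  | zero =>
    refine ⟨h0, ?_⟩
    funext v
    have e : Polynomial.aeval (Wa ω hfin) (jp d (0+1)) = aCoef0 d • (Wa ω hfin * Polynomial.aeval (Wa ω hfin) (jp d 0))
        + bCoef0 d • Polynomial.aeval (Wa ω hfin) (jp d 0) := by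
      simp only [jp, map_add, map_mul, Polynomial.aeval_C, Polynomial.aeval_X, map_one, Algebra.smul_def, mul_one]
    rw [e, hx1]
    simp only [AddMonoidAlgebra.coeff_add, AddMonoidAlgebra.coeff_smul, Finsupp.add_apply, Finsupp.smul_apply, smul_eq_mul, Wa_mul, h0]
  | succ n ih =>
    obtain ⟨i1, i2⟩ := ih
    refine ⟨i2, ?_⟩
    funext v
    have e : Polynomial.aeval (Wa ω hfin) (jp d (n+1+1)) =
        aCoef d (n+1) • (Wa ω hfin * Polynomial.aeval (Wa ω hfin) (jp d (n+1)))
        + bCoef d (n+1) • Polynomial.aeval (Wa ω hfin) (jp d (n+1))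
        - cCoef d (n+1) • Polynomial.aeval (Wa ω hfin) (jp d n) := by
      rw [jp]
      simp only [map_add, map_sub, map_mul, Polynomial.aeval_C, Polynomial.aeval_X, Algebra.smul_def]
      ring
    rw [e, hrec (n+1) (by omega)]
    simp only [AddMonoidAlgebra.coeff_add, AddMonoidAlgebra.coeff_sub, AddMonoidAlgebra.coeff_smul, Finsupp.add_apply, Finsupp.sub_apply, Finsupp.smul_apply, smul_eq_mul, Wa_mul, i1, i2, Nat.add_sub_cancel]

def wh {d : ℕ} (ω : (Fin d → ℤ) → ℝ) (hfin : (Function.support ω).Finite) (ξ : Fin d → ℝ) : ℝ :=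
  ∑ v ∈ hfin.toFinset, ω v * Real.cos (∑ i, ξ i * (v i : ℝ))

lemma ft_eq_sum {d : ℕ} (ω : (Fin d → ℤ) → ℝ) (hfin : (Function.support ω).Finite) (ξ : Fin d → ℝ) :
    ftOmega ω ξ = ∑ v ∈ hfin.toFinset, (ω v : ℂ) * ech ξ v := by
  rw [ftOmega, tsum_eq_sum (s := hfin.toFinset)]
  · rfl
  · intro v hv
    have : ω v = 0 := by simpa using hv
    simp [this]

lemma FT_Wa {d : ℕ} (ω : (Fin d → ℤ) → ℝ) (hfin : (Function.support ω).Finite) (ξ : Fin d → ℝ) :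
    FT ξ (Wa ω hfin) = ftOmega ω ξ := by
  rw [FT_apply, ft_eq_sum ω hfin]
  refine Finset.sum_congr ?_ fun v _ => rfl
  ext v
  simp [Wa, Finsupp.ofSupportFinite]

lemma ft_eq_wh {d : ℕ} (ω : (Fin d → ℤ) → ℝ) (hfin : (Function.support ω).Finite)
    (hsymm : ∀ v, ω (-v) = ω v) (ξ : Fin d → ℝ) : ftOmega ω ξ = (wh ω hfin ξ : ℂ) := by
  have hr : (ftOmega ω ξ).re = wh ω hfin ξ := by
    rw [ft_eq_sum ω hfin, Complex.re_sum, wh]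
    refine Finset.sum_congr rfl fun v _ => ?_
    rw [Complex.re_ofReal_mul, ech, mul_comm Complex.I, Complex.exp_ofReal_mul_I_re]
  have hi : (starRingEnd ℂ) (ftOmega ω ξ) = ftOmega ω ξ := by
    rw [ft_eq_sum ω hfin, map_sum]
    refine Finset.sum_bij' (fun v _ => -v) (fun v _ => -v) ?_ ?_ ?_ ?_ ?_
    · intro v hv; simpa [hsymm] using hv
    · intro v hv; simpa [hsymm] using hv
    · simp
    · simp
    · intro v _
      rw [map_mul, ech_conj, Complex.conj_ofReal, hsymm]
  rw [← hr]
  exact (Complex.conj_eq_iff_re.mp hi).symm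

lemma norm_bound_id {d : ℕ} (ω : (Fin d → ℤ) → ℝ) (hfin : (Function.support ω).Finite)
    (hsymm : ∀ v, ω (-v) = ω v)
    (x : ℕ → (Fin d → ℤ) → ℝ)
    (hx0 : ∀ v, x 0 v = if v = 0 then 1 else 0)
    (hx1 : ∀ v, x 1 v = aCoef0 d * latticeConv ω (x 0) v + bCoef0 d * x 0 v)
    (hrec : ∀ n, 1 ≤ n → ∀ v,
      x (n + 1) v = aCoef d n * latticeConv ω (x n) v + bCoef d n * x n v - cCoef d n * x (n - 1) v)
    (n : ℕ) : (2*π)^d * ∑' v, (x n v)^2 = ∫ ξ in bx d, (jy d n (wh ω hfin ξ))^2 := by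
  have h1 := (X_coeff ω hfin x hx0 hx1 hrec n).1
  have hp := parseval (Polynomial.aeval (Wa ω hfin) (jp d n))
  rw [← h1, tsum_eq_sum (s := (Polynomial.aeval (Wa ω hfin) (jp d n)).coeff.support), ← hp]
  · congr 1
    funext ξ
    rw [← Polynomial.aeval_algHom_apply, FT_Wa, ft_eq_wh ω hfin hsymm]
    have : (Polynomial.aeval ((wh ω hfin ξ : ℝ) : ℂ)) (jp d n) = ((jy d n (wh ω hfin ξ) : ℝ) : ℂ) := by
      rw [jy]
      exact Polynomial.aeval_algebraMap_apply_eq_algebraMap_eval _ _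
    rw [this, Complex.norm_real, Real.norm_eq_abs, sq_abs]
  · intro v hv
    rw [Finsupp.notMem_support_iff.mp hv]; simp

lemma wh_cont {d : ℕ} (ω : (Fin d → ℤ) → ℝ) (hfin : (Function.support ω).Finite) :
    Continuous (wh ω hfin) := by
  unfold wh; fun_prop

lemma quad_pos {d : ℕ} (ω : (Fin d → ℤ) → ℝ) (hfin : (Function.support ω).Finite)
    (hQ : (covQ d ω).PosDef) (ξ : Fin d → ℝ) (hξ : ξ ≠ 0) :
    0 < ∑ v ∈ hfin.toFinset, ω v * (∑ i, ξ i * (v i : ℝ))^2 := by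
  have h := hQ.dotProduct_mulVec_pos hξ
  have e : star ξ ⬝ᵥ (covQ d ω *ᵥ ξ) = ∑ v ∈ hfin.toFinset, ω v * (∑ i, ξ i * (v i : ℝ))^2 := by
    have hc : ∀ i j, covQ d ω i j = ∑ v ∈ hfin.toFinset, ω v * (v i : ℝ) * (v j : ℝ) := by
      intro i j
      rw [covQ, Matrix.of_apply, tsum_eq_sum]
      intro v hv
      have : ω v = 0 := by simpa using hv
      simp [this]
    simp only [dotProduct, Matrix.mulVec, hc, star_trivial, Finset.mul_sum, Finset.sum_mul]
    rw [Finset.sum_comm' (t' := Finset.univ) (s' := fun _ => Finset.univ) (by simp)]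
    rw [Finset.sum_congr rfl (fun j _ => Finset.sum_comm), Finset.sum_comm]
    refine Finset.sum_congr rfl fun v _ => ?_
    rw [sq, Finset.sum_mul_sum, Finset.mul_sum]
    refine Finset.sum_congr rfl fun j _ => ?_
    rw [Finset.mul_sum]
    refine Finset.sum_congr rfl fun i _ => ?_
    ring
  rw [← e]; exact h

lemma wh_lower {d : ℕ} (ω : (Fin d → ℤ) → ℝ)
    (hfin : (Function.support ω).Finite) (hnn : ∀ v, 0 ≤ ω v)
    (hmass : ∑' v : Fin d → ℤ, ω v = 1) (hsymm : ∀ v, ω (-v) = ω v)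
    (hQ : (covQ d ω).PosDef)
    (haper : ∀ ξ : Fin d → ℝ, (∀ i, ξ i ∈ Set.Icc (-π) π) → ξ ≠ 0 →
      ‖ftOmega ω ξ‖ < 1) :
    ∃ c : ℝ, 0 < c ∧ ∀ ξ ∈ bx d, c * ‖ξ‖^2 ≤ 1 - wh ω hfin ξ := by
  have hsum : ∑ v ∈ hfin.toFinset, ω v = 1 := by
    rw [← hmass, tsum_eq_sum]
    intro v hv; simpa using hv
  have hone : ∀ ξ, 1 - wh ω hfin ξ = ∑ v ∈ hfin.toFinset, ω v * (1 - Real.cos (∑ i, ξ i * (v i : ℝ))) := by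
    intro ξ
    simp only [mul_sub, mul_one, Finset.sum_sub_distrib, hsum, wh]
  have hap : ∀ ξ ∈ bx d, ξ ≠ 0 → wh ω hfin ξ < 1 := by
    intro ξ hξ h0
    have := haper ξ (fun i => hξ i (Set.mem_univ i)) h0
    rw [ft_eq_wh ω hfin hsymm, Complex.norm_real] at this
    exact (le_abs_self _).trans_lt this
  obtain ⟨m, hm, hm'⟩ := (isCompact_sphere (0 : Fin d → ℝ) 1).exists_forall_le'
    (f := fun ξ => ∑ v ∈ hfin.toFinset, ω v * (∑ i, ξ i * (v i : ℝ))^2)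
    (by fun_prop) (a := 0) (fun ξ hξ => quad_pos ω hfin hQ ξ (by
      rintro rfl; simp at hξ))
  have hquad : ∀ ξ : Fin d → ℝ, m * ‖ξ‖^2 ≤ ∑ v ∈ hfin.toFinset, ω v * (∑ i, ξ i * (v i : ℝ))^2 := by
    intro ξ
    by_cases h0 : ξ = 0
    · subst h0; simp
    have hn : 0 < ‖ξ‖ := norm_pos_iff.mpr h0
    have := hm' (‖ξ‖⁻¹ • ξ) (by simp [norm_smul, hn.ne'])
    have e : ∑ v ∈ hfin.toFinset, ω v * (∑ i, (‖ξ‖⁻¹ • ξ) i * (v i : ℝ))^2 =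
        (‖ξ‖⁻¹)^2 * ∑ v ∈ hfin.toFinset, ω v * (∑ i, ξ i * (v i : ℝ))^2 := by
      rw [Finset.mul_sum]
      refine Finset.sum_congr rfl fun v _ => ?_
      simp only [Pi.smul_apply, smul_eq_mul, mul_assoc, ← Finset.mul_sum]
      ring
    simp only [e] at this
    calc m * ‖ξ‖^2 ≤ ((‖ξ‖⁻¹)^2 * ∑ v ∈ hfin.toFinset, ω v * (∑ i, ξ i * (v i : ℝ))^2) * ‖ξ‖^2 := by gcongr
      _ = _ := by field_simp
  set K : ℝ := 1 + ∑ v ∈ hfin.toFinset, ∑ i, |(v i : ℝ)| with hK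
  have hKp : 0 < K := by positivity
  have hdot : ∀ ξ : Fin d → ℝ, ∀ v ∈ hfin.toFinset, |∑ i, ξ i * (v i : ℝ)| ≤ ‖ξ‖ * K := by
    intro ξ v hv
    calc |∑ i, ξ i * (v i : ℝ)| ≤ ∑ i, |ξ i * (v i : ℝ)| := Finset.abs_sum_le_sum_abs _ _
      _ ≤ ∑ i, ‖ξ‖ * |(v i : ℝ)| := by
          refine Finset.sum_le_sum fun i _ => ?_
          rw [abs_mul]
          gcongr
          exact norm_le_pi_norm ξ i
      _ = ‖ξ‖ * ∑ i, |(v i : ℝ)| := by rw [Finset.mul_sum]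
      _ ≤ ‖ξ‖ * K := by
          gcongr
          have := Finset.single_le_sum (f := fun v : Fin d → ℤ => ∑ i, |(v i : ℝ)|) (fun v _ => by positivity) hv
          linarith
  set R : ℝ := π / K
  have hpi := Real.pi_pos
  have hR : 0 < R := by positivity
  obtain ⟨δ, hδ, hδ'⟩ := ((bx_compact d).inter_right (isClosed_le continuous_const continuous_norm :
      IsClosed {ξ : Fin d → ℝ | R ≤ ‖ξ‖})).exists_forall_le'
    (f := fun ξ => 1 - wh ω hfin ξ)
    (continuous_const.sub (wh_cont ω hfin)).continuousOn (a := 0) (fun ξ hξ => by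
      have h2 : R ≤ ‖ξ‖ := hξ.2
      have := hap ξ hξ.1 (by rintro rfl; simp at h2; linarith)
      linarith)
  refine ⟨min (2/π^2*m) (δ/π^2), by positivity, ?_⟩
  intro ξ hξ
  rcases le_or_gt R ‖ξ‖ with h | h
  · have h1 := hδ' ξ ⟨hξ, h⟩
    have h2 : ‖ξ‖ ≤ π := by
      rw [pi_norm_le_iff_of_nonneg hpi.le]
      intro i
      rw [Real.norm_eq_abs, abs_le]
      exact hξ i (Set.mem_univ i)
    calc _ ≤ (δ/π^2) * π^2 := by
          gcongr
          exact min_le_right _ _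
      _ = δ := by field_simp
      _ ≤ _ := h1
  · calc _ ≤ (2/π^2*m) * ‖ξ‖^2 := by
          gcongr
          exact min_le_left _ _
      _ = 2/π^2 * (m * ‖ξ‖^2) := by ring
      _ ≤ 2/π^2 * ∑ v ∈ hfin.toFinset, ω v * (∑ i, ξ i * (v i : ℝ))^2 := by
          gcongr; exact hquad ξ
      _ = ∑ v ∈ hfin.toFinset, ω v * (2/π^2 * (∑ i, ξ i * (v i : ℝ))^2) := by
          rw [Finset.mul_sum]; refine Finset.sum_congr rfl fun v _ => ?_; ring
      _ ≤ _ := by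
          rw [hone]
          refine Finset.sum_le_sum fun v hv => mul_le_mul_of_nonneg_left ?_ (hnn v)
          have : |∑ i, ξ i * (v i : ℝ)| ≤ π := by
            refine (hdot ξ v hv).trans ?_
            have := (lt_div_iff₀ hKp).mp h
            exact this.le
          have := Real.cos_le_one_sub_mul_cos_sq this
          linarith

lemma wh_lower2 {d : ℕ} (ω : (Fin d → ℤ) → ℝ)
    (hfin : (Function.support ω).Finite)
    (hmass : ∑' v : Fin d → ℤ, ω v = 1) (hsymm : ∀ v, ω (-v) = ω v)
    (haper : ∀ ξ : Fin d → ℝ, (∀ i, ξ i ∈ Set.Icc (-π) π) → ξ ≠ 0 →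
      ‖ftOmega ω ξ‖ < 1) :
    ∃ ε : ℝ, 0 < ε ∧ ∀ ξ ∈ bx d, -1 + ε ≤ wh ω hfin ξ := by
  have hsum : ∑ v ∈ hfin.toFinset, ω v = 1 := by
    rw [← hmass, tsum_eq_sum]
    intro v hv; simpa using hv
  obtain ⟨e, he, he'⟩ := (bx_compact d).exists_forall_le' (f := wh ω hfin)
    (wh_cont ω hfin).continuousOn (a := -1) (fun ξ hξ => by
      by_cases h0 : ξ = 0
      · subst h0; simp [wh, hsum]
      · have := haper ξ (fun i => hξ i (Set.mem_univ i)) h0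
        rw [ft_eq_wh ω hfin hsymm, Complex.norm_real] at this
        exact (abs_lt.mp this).1)
  exact ⟨e + 1, by linarith, fun ξ hξ => by linarith [he' ξ hξ]⟩

lemma integral_scaled (d n : ℕ) (hn : 1 ≤ n) :
    Integrable (fun ξ : Fin d → ℝ => ((1 + n * ‖ξ‖)^(d+1))⁻¹) ∧
    ∫ ξ : Fin d → ℝ, ((1 + n * ‖ξ‖)^(d+1))⁻¹ =
      ((n:ℝ)^d)⁻¹ * ∫ ξ : Fin d → ℝ, ((1 + ‖ξ‖)^(d+1))⁻¹ := by
  have hn' : (0:ℝ) < n := by exact_mod_cast hn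
  have hI : Integrable (fun ξ : Fin d → ℝ => ((1 + ‖ξ‖)^(d+1))⁻¹) := by
    have := integrable_one_add_norm (E := Fin d → ℝ) (μ := volume) (r := ((d+1:ℕ):ℝ)) (by simp)
    refine this.congr (Eventually.of_forall fun ξ => ?_)
    simp only
    rw [Real.rpow_neg (by positivity), Real.rpow_natCast]
  have e : (fun ξ : Fin d → ℝ => ((1 + n * ‖ξ‖)^(d+1))⁻¹) =
      fun ξ => (fun ζ : Fin d → ℝ => ((1 + ‖ζ‖)^(d+1))⁻¹) ((n:ℝ) • ξ) := by
    funext ξ; simp [norm_smul]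
  constructor
  · rw [e]; exact hI.comp_smul hn'.ne'
  · rw [e, Measure.integral_comp_smul volume (fun ζ : Fin d → ℝ => ((1 + ‖ζ‖)^(d+1))⁻¹) (n:ℝ)]
    simp [abs_of_pos hn']

/-- The squared ℓ² norm of the Jacobi polynomial iteration is O(n^{-d}). -/
theorem jacobi_iteration_l2_bound
    (d : ℕ) (hd : 1 ≤ d) (ω : (Fin d → ℤ) → ℝ)
    (hfin : (Function.support ω).Finite) (hnn : ∀ v, 0 ≤ ω v)
    (hmass : ∑' v : Fin d → ℤ, ω v = 1) (hsymm : ∀ v, ω (-v) = ω v)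
    (hQ : (covQ d ω).PosDef)
    (haper : ∀ ξ : Fin d → ℝ, (∀ i, ξ i ∈ Set.Icc (-π) π) → ξ ≠ 0 →
      ‖ftOmega ω ξ‖ < 1)
    (x : ℕ → (Fin d → ℤ) → ℝ)
    (hx0 : ∀ v, x 0 v = if v = 0 then 1 else 0)
    (hx1 : ∀ v, x 1 v = aCoef0 d * latticeConv ω (x 0) v + bCoef0 d * x 0 v)
    (hrec : ∀ n, 1 ≤ n → ∀ v,
      x (n + 1) v = aCoef d n * latticeConv ω (x n) v + bCoef d n * x n v - cCoef d n * x (n - 1) v) :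
    ∃ C : ℝ, 0 < C ∧ ∀ n : ℕ, 1 ≤ n → ∑' v : Fin d → ℤ, (x n v) ^ 2 ≤ C / (n : ℝ) ^ d := by
  obtain ⟨c, hc, hlow⟩ := wh_lower ω hfin hnn hmass hsymm hQ haper
  obtain ⟨ε, hε, hlow2⟩ := wh_lower2 ω hfin hmass hsymm haper
  obtain ⟨C, hC, hb⟩ := jbound d hd ε hε
  have hid := norm_bound_id ω hfin hsymm x hx0 hx1 hrec
  have hsc : 0 < √c := Real.sqrt_pos.mpr hc
  set K : ℝ := 1 + 1/√c with hK
  have hKp : 0 < K := by positivity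
  set I : ℝ := ∫ ξ : Fin d → ℝ, ((1 + ‖ξ‖)^(d+1))⁻¹ with hI
  have hI0 : 0 ≤ I := integral_nonneg fun ξ => by positivity
  have hpi := Real.pi_pos
  have hs0 : ∀ m, 0 ≤ ∑' v : Fin d → ℤ, (x m v)^2 := fun m => tsum_nonneg fun v => sq_nonneg _
  have hT0 : 0 ≤ ∑ m ∈ Finset.range d, (∑' v : Fin d → ℤ, (x m v)^2) * (m:ℝ)^d :=
    Finset.sum_nonneg fun m _ => mul_nonneg (hs0 m) (by positivity)
  refine ⟨1 + C * K^(d+1) * I / (2*π)^d + ∑ m ∈ Finset.range d, (∑' v : Fin d → ℤ, (x m v)^2) * (m:ℝ)^d,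
    by positivity, ?_⟩
  intro n hn
  have hn' : (0:ℝ) < n := by exact_mod_cast hn
  rw [le_div_iff₀ (by positivity)]
  rcases lt_or_ge n d with hnd | hnd
  · have h1 := Finset.single_le_sum (f := fun m : ℕ => (∑' v : Fin d → ℤ, (x m v)^2) * (m:ℝ)^d)
      (fun m _ => mul_nonneg (hs0 m) (by positivity)) (Finset.mem_range.mpr hnd)
    have h2 : 0 ≤ C * K^(d+1) * I / (2*π)^d := by positivity
    linarith
  · obtain ⟨hint, hval⟩ := integral_scaled d n hn
    have hpt : ∀ ξ ∈ bx d, (jy d n (wh ω hfin ξ))^2 ≤ C * K^(d+1) * ((1 + n * ‖ξ‖)^(d+1))⁻¹ := by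
      intro ξ hξ
      have l1 := hlow ξ hξ
      have l2 : 0 ≤ c * ‖ξ‖^2 := by positivity
      have b := hb n hnd (wh ω hfin ξ) (hlow2 ξ hξ) (by linarith)
      have l3 : √c * ‖ξ‖ ≤ √(1 - wh ω hfin ξ) := by
        apply Real.le_sqrt_of_sq_le
        rw [mul_pow, Real.sq_sqrt hc.le]; exact l1
      set s := √(1 - wh ω hfin ξ)
      have hs : 0 ≤ s := Real.sqrt_nonneg _
      have l4 : 1 + n * ‖ξ‖ ≤ K * (1 + n * s) := by
        have : ‖ξ‖ ≤ 1/√c * s := by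
          rw [div_mul_eq_mul_div, one_mul, le_div_iff₀ hsc]; linarith
        have h5 : n * ‖ξ‖ ≤ n * (1/√c * s) := by gcongr
        have h6 : 0 < 1/√c := by positivity
        have h7 : 0 ≤ (n:ℝ) * s := by positivity
        rw [hK]
        nlinarith
      rw [← div_eq_mul_inv, le_div_iff₀ (by positivity)]
      calc (jy d n (wh ω hfin ξ))^2 * (1 + n * ‖ξ‖)^(d+1)
          ≤ (jy d n (wh ω hfin ξ))^2 * (K * (1 + n * s))^(d+1) := by gcongr
        _ = ((jy d n (wh ω hfin ξ))^2 * (1 + n * s)^(d+1)) * K^(d+1) := by rw [mul_pow]; ring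
        _ ≤ C * K^(d+1) := by gcongr
    have hcont : Continuous fun ξ : Fin d → ℝ => (jy d n (wh ω hfin ξ))^2 := by
      have : Continuous (jy d n) := (jp d n).continuous
      exact (this.comp (wh_cont ω hfin)).pow 2
    have hle : ∫ ξ in bx d, (jy d n (wh ω hfin ξ))^2 ≤ C * K^(d+1) * (((n:ℝ)^d)⁻¹ * I) := by
      calc ∫ ξ in bx d, (jy d n (wh ω hfin ξ))^2
          ≤ ∫ ξ in bx d, C * K^(d+1) * ((1 + n * ‖ξ‖)^(d+1))⁻¹ :=
            setIntegral_mono_on (hcont.continuousOn.integrableOn_compact (bx_compact d))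
              (hint.const_mul _).integrableOn (bx_compact d).measurableSet hpt
        _ ≤ ∫ ξ : Fin d → ℝ, C * K^(d+1) * ((1 + n * ‖ξ‖)^(d+1))⁻¹ :=
            setIntegral_le_integral (hint.const_mul _)
              (Eventually.of_forall fun ξ => by simp only [Pi.zero_apply]; positivity)
        _ = _ := by rw [integral_const_mul, hval]
    rw [← hid n] at hle
    have h2 : (∑' v : Fin d → ℤ, (x n v)^2) * (n:ℝ)^d ≤ C * K^(d+1) * I / (2*π)^d := by
      rw [le_div_iff₀ (by positivity)]
      calc (∑' v : Fin d → ℤ, (x n v)^2) * (n:ℝ)^d * (2*π)^d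
          = ((2*π)^d * ∑' v : Fin d → ℤ, (x n v)^2) * (n:ℝ)^d := by ring
        _ ≤ (C * K^(d+1) * (((n:ℝ)^d)⁻¹ * I)) * (n:ℝ)^d := by gcongr
        _ = _ := by field_simp
    linarith
end
end

section
/- Let t > 0 and ξ ∈ ℝ^d with ξ ≠ 0. Then the discrete Fourier transforms of the Jacobi polynomial iteration converge pointwise: ∑_{v∈ℤ^d} x_{⌊t/ε⌋}(v) e^{iε⟨ξ,v⟩} → 2^{d/2} Γ(d/2+1) ⟨ξ, Qξ⟩^{−d/4} t^{−d/2} J_{d/2}( t ⟨ξ, Qξ⟩^{1/2} ) as ε → 0⁺, where J_{d/2} is the Bessel function of the first kind of order d/2. -/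
open MeasureTheory Matrix Filter Topology Real

noncomputable section

def poch (x : ℝ) : ℕ → ℝ
  | 0 => 1
  | (k+1) => poch x k * (x + k)

lemma poch_zero (x : ℝ) : poch x 0 = 1 := rfl
lemma poch_succ (x : ℝ) (k : ℕ) : poch x (k+1) = poch x k * (x + k) := rfl
lemma poch_succ' (x : ℝ) (k : ℕ) : poch x (k+1) = x * poch (x+1) k := by
  induction k with
  | zero => simp [poch]
  | succ k ih => rw [poch_succ, ih, poch_succ]; push_cast; ring

lemma poch_pos {x : ℝ} (hx : 0 < x) (k : ℕ) : 0 < poch x k := by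
  induction k with
  | zero => simp [poch]
  | succ k ih => rw [poch_succ]; positivity

lemma poch_neg_eq_zero (n : ℕ) (k : ℕ) (h : n < k) : poch (-(n:ℝ)) k = 0 := by
  induction k with
  | zero => omega
  | succ k ih =>
    rw [poch_succ]
    rcases Nat.lt_succ_iff_lt_or_eq.mp h with h | h
    · rw [ih h, zero_mul]
    · subst h; simp

lemma poch_neg_abs (n : ℕ) (k : ℕ) : |poch (-(n:ℝ)) k| ≤ (n:ℝ)^k := by
  induction k with
  | zero => simp [poch]
  | succ k ih =>
    rcases lt_or_ge n k with h | h
    · rw [poch_succ, poch_neg_eq_zero n k h, zero_mul, abs_zero]; positivity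
    · rw [poch_succ, abs_mul, pow_succ]
      have h' : (k:ℝ) ≤ n := by exact_mod_cast h
      have : |(-(n:ℝ) + k)| ≤ n := by
        rw [abs_le]; constructor <;> linarith [(Nat.cast_nonneg k : (0:ℝ) ≤ k)]
      gcongr

lemma poch_ratio (a : ℝ) (ha : 0 < a) (n k : ℕ) :
    poch ((n:ℝ) + a + 1) k ≤ poch (a+1) k * ((n:ℝ)+1)^k := by
  induction k with
  | zero => simp [poch]
  | succ k ih =>
    rw [poch_succ, poch_succ, pow_succ]
    have : (n:ℝ) + a + 1 + k ≤ (a + 1 + k) * (n+1) := by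
      have : 0 ≤ (n:ℝ) * (a + k) := by positivity
      nlinarith
    calc _ ≤ (poch (a+1) k * ((n:ℝ)+1)^k) * ((a + 1 + k) * (n+1)) := by
            have := poch_pos (show 0 < a + 1 by linarith) k
            gcongr
      _ = _ := by ring

def TC (a : ℝ) (n k : ℕ) : ℝ :=
  poch (-(n:ℝ)) k * poch ((n:ℝ) + a + 1) k / (poch (a+1) k * (k.factorial : ℝ))

def pJ (a : ℝ) (n : ℕ) (z : ℝ) : ℝ := ∑ k ∈ Finset.range (n+1), TC a n k * z^k

lemma TC_eq_zero (a : ℝ) (n k : ℕ) (h : n < k) : TC a n k = 0 := by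
  simp [TC, poch_neg_eq_zero n k h]

lemma pJ_eq (a : ℝ) (n N : ℕ) (h : n + 1 ≤ N) (z : ℝ) :
    pJ a n z = ∑ k ∈ Finset.range N, TC a n k * z^k := by
  unfold pJ
  apply Finset.sum_subset
  · intro k hk; simp at *; omega
  · intro k _ hk
    rw [TC_eq_zero, zero_mul]; simp at hk; omega

lemma pJ_tsum (a : ℝ) (n : ℕ) (z : ℝ) : pJ a n z = ∑' k, TC a n k * z^k := by
  rw [tsum_eq_sum (s := Finset.range (n+1))]
  · rfl
  · intro k hk
    rw [TC_eq_zero, zero_mul]; simp at hk; omega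

lemma TC_abs (a : ℝ) (ha : 0 < a) (n k : ℕ) (z : ℝ) :
    |TC a n k * z^k| ≤ ((n:ℝ) * (n+1) * |z|)^k / (k.factorial : ℝ) := by
  have h1 := poch_pos (show 0 < a + 1 by linarith) k
  have h2 := poch_pos (show 0 < (n:ℝ) + a + 1 by positivity) k
  have h3 : (0:ℝ) < k.factorial := by exact_mod_cast k.factorial_pos
  rw [TC, abs_mul, abs_div, abs_mul, abs_mul, abs_of_pos h1, abs_of_pos h2, abs_of_pos h3, abs_pow,
    mul_pow, mul_pow, div_mul_eq_mul_div, div_le_div_iff₀ (by positivity) h3]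
  calc _ ≤ (n:ℝ)^k * (poch (a+1) k * ((n:ℝ)+1)^k) * |z|^k * k.factorial := by
        gcongr
        · exact poch_neg_abs n k
        · exact poch_ratio a ha n k
    _ = _ := by ring

lemma TC_rec (a : ℝ) (ha : 0 < a) (m k : ℕ) (A B C : ℝ)
    (hA : A = (2 * ((m:ℝ)+1) + a + 1) * (2 * ((m:ℝ)+1) + a + 2) / (2 * ((m:ℝ)+1 + 1 + a)^2))
    (hB : B = a^2 * (2 * ((m:ℝ)+1) + a + 1) / (2 * ((m:ℝ)+1 + 1 + a)^2 * (2 * ((m:ℝ)+1) + a)))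
    (hC : C = ((m:ℝ)+1)^2 * (2 * ((m:ℝ)+1) + a + 2) / (((m:ℝ)+1 + 1 + a)^2 * (2 * ((m:ℝ)+1) + a))) :
    TC a (m+2) (k+1) = (A + B) * TC a (m+1) (k+1) - 2 * A * TC a (m+1) k - C * TC a m (k+1) := by
  subst hA hB hC
  cases k with
  | zero =>
    simp only [TC, poch, Nat.factorial]
    push_cast
    field_simp
    ring
  | succ k =>
    have e1 : poch (-((m+2:ℕ):ℝ)) (k+2) = (-(m:ℝ)-2) * (-(m:ℝ)-1) * poch (-(m:ℝ)) k := by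
      rw [poch_succ', poch_succ']; push_cast; ring_nf
    have e2 : poch (-((m+1:ℕ):ℝ)) (k+2) = (-(m:ℝ)-1) * (poch (-(m:ℝ)) k * (-m+k)) := by
      rw [poch_succ', show (-((m+1:ℕ):ℝ) + 1) = -(m:ℝ) by push_cast; ring, poch_succ]
      push_cast; ring
    have e3 : poch (-((m+1:ℕ):ℝ)) (k+1) = (-(m:ℝ)-1) * poch (-(m:ℝ)) k := by
      rw [poch_succ', show (-((m+1:ℕ):ℝ) + 1) = -(m:ℝ) by push_cast; ring]
      push_cast; ring
    have e4 : poch (-(m:ℝ)) (k+2) = poch (-(m:ℝ)) k * (-m+k) * (-m+k+1) := by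
      rw [poch_succ, poch_succ]; push_cast; ring
    have f1 : poch (((m+2:ℕ):ℝ) + a + 1) (k+2) = poch ((m:ℝ) + a + 3) k * (m+a+3+k) * (m+a+4+k) := by
      rw [poch_succ, poch_succ, show (((m+2:ℕ):ℝ) + a + 1) = m + a + 3 by push_cast; ring]
      push_cast; ring
    have f2 : poch (((m+1:ℕ):ℝ) + a + 1) (k+2) = (m+a+2) * (poch ((m:ℝ) + a + 3) k * (m+a+3+k)) := by
      rw [poch_succ', poch_succ, show (((m+1:ℕ):ℝ) + a + 1) + 1 = m + a + 3 by push_cast; ring]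
      push_cast; ring
    have f3 : poch (((m+1:ℕ):ℝ) + a + 1) (k+1) = (m+a+2) * poch ((m:ℝ) + a + 3) k := by
      rw [poch_succ', show (((m+1:ℕ):ℝ) + a + 1) + 1 = m + a + 3 by push_cast; ring]
      push_cast; ring
    have f4 : poch ((m:ℝ) + a + 1) (k+2) = (m+a+1) * ((m+a+2) * poch ((m:ℝ) + a + 3) k) := by
      rw [poch_succ', poch_succ', show (m:ℝ) + a + 1 + 1 + 1 = m + a + 3 by ring]
      ring
    have g1 : poch (a+1) (k+2) = poch (a+1) k * (a+1+k) * (a+2+k) := by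
      rw [poch_succ, poch_succ]; push_cast; ring
    have g2 : poch (a+1) (k+1) = poch (a+1) k * (a+1+k) := poch_succ _ _
    simp only [TC]
    rw [show k+1+1 = k+2 from rfl, e1, e2, e3, e4, f1, f2, f3, f4, g1, g2]
    have h1 := (poch_pos (show 0 < a + 1 by linarith) k).ne'
    generalize poch (a+1) k = D at *
    generalize poch ((m:ℝ) + a + 3) k = G
    generalize poch (-(m:ℝ)) k = E
    rw [show (k+2).factorial = (k+2) * ((k+1) * k.factorial) from rfl,
      show (k+1).factorial = (k+1) * k.factorial from rfl]
    have h3 : (k.factorial:ℝ) ≠ 0 := by exact_mod_cast k.factorial_pos.ne'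
    push_cast
    generalize (k.factorial : ℝ) = K at *
    field_simp
    ring

lemma pJ_zero (a z : ℝ) : pJ a 0 z = 1 := by simp [pJ, TC, poch]

lemma pJ_one (a z : ℝ) (ha : 0 < a) : pJ a 1 z = 1 - (a+2)/(a+1) * z := by
  simp [pJ, TC, poch, Finset.sum_range_succ]; ring

lemma pJ_rec (a : ℝ) (ha : 0 < a) (m : ℕ) (A B C z : ℝ)
    (hA : A = (2 * ((m:ℝ)+1) + a + 1) * (2 * ((m:ℝ)+1) + a + 2) / (2 * ((m:ℝ)+1 + 1 + a)^2))
    (hB : B = a^2 * (2 * ((m:ℝ)+1) + a + 1) / (2 * ((m:ℝ)+1 + 1 + a)^2 * (2 * ((m:ℝ)+1) + a)))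
    (hC : C = ((m:ℝ)+1)^2 * (2 * ((m:ℝ)+1) + a + 2) / (((m:ℝ)+1 + 1 + a)^2 * (2 * ((m:ℝ)+1) + a))) :
    pJ a (m+2) z = A * ((1 - 2 * z) * pJ a (m+1) z) + B * pJ a (m+1) z - C * pJ a m z := by
  have h0 : A + B - C = 1 := by
    subst hA hB hC; field_simp; ring
  have e : A * ((1 - 2 * z) * pJ a (m+1) z) + B * pJ a (m+1) z - C * pJ a m z =
    (A + B) * pJ a (m+1) z - 2 * A * (z * pJ a (m+1) z) - C * pJ a m z := by ring
  rw [e]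
  have s : z * pJ a (m+1) z = ∑ k ∈ Finset.range (m+2), TC a (m+1) k * z^(k+1) := by
    rw [pJ, Finset.mul_sum]; exact Finset.sum_congr rfl fun k _ => by ring
  rw [s, pJ_eq a (m+1) (m+3) (by omega), pJ_eq a m (m+3) (by omega), pJ_eq a (m+2) (m+3) (by omega),
    Finset.sum_range_succ', Finset.sum_range_succ' (fun k => TC a (m+1) k * z^k),
    Finset.sum_range_succ' (fun k => TC a m k * z^k)]
  have t0 : ∀ n, TC a n 0 = 1 := fun n => by simp [TC, poch]
  simp only [t0, pow_zero, mul_one]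
  have : ∑ k ∈ Finset.range (m+2), TC a (m+2) (k+1) * z^(k+1) =
     (A + B) * ∑ k ∈ Finset.range (m+2), TC a (m+1) (k+1) * z^(k+1)
      - 2 * A * ∑ k ∈ Finset.range (m+2), TC a (m+1) k * z^(k+1)
      - C * ∑ k ∈ Finset.range (m+2), TC a m (k+1) * z^(k+1) := by
    rw [Finset.mul_sum, Finset.mul_sum, Finset.mul_sum, ← Finset.sum_sub_distrib,
      ← Finset.sum_sub_distrib]
    refine Finset.sum_congr rfl fun k _ => ?_
    rw [TC_rec a ha m k A B C hA hB hC]; ring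
  rw [this]; linear_combination (-1 : ℝ) * h0

/-! Fourier part -/

lemma ft_conv {d : ℕ} (ω f : (Fin d → ℤ) → ℝ) (hω : (Function.support ω).Finite)
    (hf : (Function.support f).Finite) (θ : Fin d → ℝ) :
    ftOmega (latticeConv ω f) θ = ftOmega ω θ * ftOmega f θ := by
  have hc : ∀ v, latticeConv ω f v = ∑ η ∈ hf.toFinset, ω (v - η) * f η := by
    intro v
    unfold latticeConv
    apply tsum_eq_sum
    intro η hη
    simp at hη
    simp [hη]
  have hsum : ∀ η : Fin d → ℤ, Summable fun v => ((ω (v - η) * f η : ℝ) : ℂ) *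
      Complex.exp (Complex.I * ((∑ i, θ i * (v i : ℝ) : ℝ) : ℂ)) := by
    intro η
    apply summable_of_hasFiniteSupport
    apply (hω.preimage (f := fun v => v - η) (by
      intro a _ b _ h; simpa using h)).subset
    intro v hv
    simp only [Function.mem_support, Set.mem_preimage] at *
    intro h; apply hv; simp [h]
  have hf2 : ftOmega f θ = ∑ η ∈ hf.toFinset, (f η : ℂ) *
      Complex.exp (Complex.I * ((∑ i, θ i * (η i : ℝ) : ℝ) : ℂ)) := by
    unfold ftOmega
    apply tsum_eq_sum
    intro η hη
    simp at hη
    simp [hη]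
  have : ftOmega (latticeConv ω f) θ = ∑' v : Fin d → ℤ, ∑ η ∈ hf.toFinset,
      ((ω (v - η) * f η : ℝ) : ℂ) *
      Complex.exp (Complex.I * ((∑ i, θ i * (v i : ℝ) : ℝ) : ℂ)) := by
    unfold ftOmega
    refine tsum_congr fun v => ?_
    rw [hc, Complex.ofReal_sum, Finset.sum_mul]
  rw [this, Summable.tsum_finsetSum (fun η _ => hsum η), hf2, Finset.mul_sum]
  refine Finset.sum_congr rfl fun η _ => ?_
  rw [← (Equiv.addRight η).tsum_eq, ftOmega, ← tsum_mul_right]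
  refine tsum_congr fun v => ?_
  have : (∑ i, θ i * (((v + η) i : ℤ) : ℝ)) = (∑ i, θ i * (v i : ℝ)) + ∑ i, θ i * (η i : ℝ) := by
    rw [← Finset.sum_add_distrib]
    refine Finset.sum_congr rfl fun i _ => ?_
    simp; ring
  simp only [Equiv.coe_addRight, add_sub_cancel_right]
  rw [this]
  push_cast
  rw [mul_add, Complex.exp_add]
  ring

lemma conv_fin {d : ℕ} (ω f : (Fin d → ℤ) → ℝ) (hω : (Function.support ω).Finite)
    (hf : (Function.support f).Finite) : (Function.support (latticeConv ω f)).Finite := by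
  apply (hω.add hf).subset
  intro v hv
  by_contra h
  apply hv
  unfold latticeConv
  rw [← tsum_zero (α := ℝ) (β := Fin d → ℤ)]
  refine tsum_congr fun η => ?_
  by_contra h2
  apply h
  refine ⟨v - η, ?_, η, ?_, by simp⟩
  · exact left_ne_zero_of_mul h2
  · exact right_ne_zero_of_mul h2

lemma ft_summable {d : ℕ} (f : (Fin d → ℤ) → ℝ)
    (hf : (Function.support f).Finite) (θ : Fin d → ℝ) :
    Summable fun v : Fin d → ℤ => (f v : ℂ) *
      Complex.exp (Complex.I * ((∑ i, θ i * (v i : ℝ) : ℝ) : ℂ)) := by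
  apply summable_of_hasFiniteSupport
  apply hf.subset
  intro v hv h
  apply hv; simp [h]

lemma ft_lin {d : ℕ} (f g h : (Fin d → ℤ) → ℝ) (A B C : ℝ)
    (hf : (Function.support f).Finite) (hg : (Function.support g).Finite)
    (hh : (Function.support h).Finite) (θ : Fin d → ℝ) :
    ftOmega (fun v => A * f v + B * g v - C * h v) θ =
      A * ftOmega f θ + B * ftOmega g θ - C * ftOmega h θ := by
  unfold ftOmega
  rw [← tsum_mul_left, ← tsum_mul_left, ← tsum_mul_left,
    ← Summable.tsum_add ((ft_summable f hf θ).mul_left _) ((ft_summable g hg θ).mul_left _),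
    ← Summable.tsum_sub (((ft_summable f hf θ).mul_left _).add ((ft_summable g hg θ).mul_left _))
      ((ft_summable h hh θ).mul_left _)]
  refine tsum_congr fun v => ?_
  push_cast; ring

lemma lin_fin {d : ℕ} (f g h : (Fin d → ℤ) → ℝ) (A B C : ℝ)
    (hf : (Function.support f).Finite) (hg : (Function.support g).Finite)
    (hh : (Function.support h).Finite) :
    (Function.support (fun v => A * f v + B * g v - C * h v)).Finite := by
  apply ((hf.union hg).union hh).subset
  intro v hv
  by_contra hn
  simp at hn
  apply hv
  simp [hn]

lemma ft_cos {d : ℕ} (ω : (Fin d → ℤ) → ℝ) (hfin : (Function.support ω).Finite)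
    (hsymm : ∀ v, ω (-v) = ω v) (θ : Fin d → ℝ) :
    ftOmega ω θ = ((∑ v ∈ hfin.toFinset, ω v * Real.cos (∑ i, θ i * (v i : ℝ)) : ℝ) : ℂ) := by
  have h1 : ftOmega ω θ = ∑' v : Fin d → ℤ, (ω v : ℂ) *
      Complex.exp (Complex.I * ((-(∑ i, θ i * (v i : ℝ)) : ℝ) : ℂ)) := by
    unfold ftOmega
    rw [← (Equiv.neg (Fin d → ℤ)).tsum_eq]
    refine tsum_congr fun v => ?_
    simp [hsymm]
  have h2 : Summable fun v : Fin d → ℤ => (ω v : ℂ) *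
      Complex.exp (Complex.I * ((-(∑ i, θ i * (v i : ℝ)) : ℝ) : ℂ)) := by
    apply summable_of_hasFiniteSupport
    apply hfin.subset
    intro v hv h
    apply hv; simp [h]
  have h3 : ftOmega ω θ + ftOmega ω θ = ∑' v : Fin d → ℤ, 2 * ((ω v * Real.cos (∑ i, θ i * (v i : ℝ)) : ℝ) : ℂ) := by
    nth_rw 2 [h1]
    nth_rw 1 [ftOmega]
    rw [← Summable.tsum_add (ft_summable ω hfin θ) h2]
    refine tsum_congr fun v => ?_
    generalize (∑ i, θ i * (v i : ℝ)) = s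
    push_cast
    rw [Complex.cos]
    ring_nf
  rw [tsum_mul_left, ← two_mul] at h3
  have h4 := mul_left_cancel₀ two_ne_zero h3
  rw [h4, Complex.ofReal_sum]
  apply tsum_eq_sum
  intro v hv
  simp at hv
  simp [hv]

lemma one_sub_cos_lim (s : ℝ) :
    Tendsto (fun ε : ℝ => (1 - Real.cos (ε * s)) / ε^2) (𝓝[>] 0) (𝓝 (s^2/2)) := by
  have h : HasDerivAt (fun ε : ℝ => Real.sin (ε * (s/2))) (s/2) 0 := by
    have := ((hasDerivAt_id (0:ℝ)).mul_const (s/2)).sin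
    simpa using this
  have h2 := (hasDerivAt_iff_tendsto_slope.mp h).mono_left
    (nhdsWithin_mono 0 (show Set.Ioi (0:ℝ) ⊆ {0}ᶜ from fun x hx => (ne_of_gt hx)))
  have h3 := (h2.pow 2).const_mul 2
  rw [show 2 * (s/2)^2 = s^2/2 by ring] at h3
  refine h3.congr' ?_
  filter_upwards [self_mem_nhdsWithin] with ε hε
  have : ε ≠ 0 := ne_of_gt hε
  rw [slope_def_field]
  have hc : Real.cos (ε * s) = 1 - 2 * Real.sin (ε * (s/2))^2 := by
    rw [show ε * s = 2 * (ε * (s/2)) by ring, Real.cos_two_mul, Real.cos_sq']; ring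
  rw [hc]
  simp
  field_simp

lemma ft_lim {d : ℕ} (ω : (Fin d → ℤ) → ℝ) (hfin : (Function.support ω).Finite)
    (hmass : ∑' v : Fin d → ℤ, ω v = 1) (ξ : Fin d → ℝ) :
    Tendsto (fun ε : ℝ => (1 - ∑ v ∈ hfin.toFinset, ω v * Real.cos (∑ i, (ε * ξ i) * (v i : ℝ))) / ε^2)
      (𝓝[>] 0) (𝓝 ((ξ ⬝ᵥ (covQ d ω *ᵥ ξ)) / 2)) := by
  have hm : ∑ v ∈ hfin.toFinset, ω v = 1 := by
    rw [← hmass]; symm; apply tsum_eq_sum; intro v hv; simpa using hv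
  have hq : ξ ⬝ᵥ (covQ d ω *ᵥ ξ) = ∑ v ∈ hfin.toFinset, ω v * (∑ i, ξ i * (v i : ℝ))^2 := by
    have hcov : ∀ i j, covQ d ω i j = ∑ v ∈ hfin.toFinset, ω v * (v i : ℝ) * (v j : ℝ) := by
      intro i j
      simp only [covQ, Matrix.of_apply]
      apply tsum_eq_sum; intro v hv; simp at hv; simp [hv]
    simp only [dotProduct, mulVec, hcov, Finset.sum_mul, Finset.mul_sum, sq]
    rw [Finset.sum_comm' (t' := Finset.univ) (s' := fun _ => Finset.univ) (by simp)]
    conv_lhs =>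
      enter [2, i]
      rw [Finset.sum_comm]
    rw [Finset.sum_comm]
    refine Finset.sum_congr rfl fun v _ => ?_
    refine Finset.sum_congr rfl fun i _ => ?_
    refine Finset.sum_congr rfl fun j _ => ?_
    ring
  have key : Tendsto (fun ε : ℝ => ∑ v ∈ hfin.toFinset,
      ω v * ((1 - Real.cos (ε * ∑ i, ξ i * (v i : ℝ))) / ε^2)) (𝓝[>] 0)
      (𝓝 (∑ v ∈ hfin.toFinset, ω v * ((∑ i, ξ i * (v i : ℝ))^2 / 2))) :=
    tendsto_finsetSum _ fun v _ => (one_sub_cos_lim _).const_mul _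
  have e2 : (ξ ⬝ᵥ (covQ d ω *ᵥ ξ)) / 2 =
      ∑ v ∈ hfin.toFinset, ω v * ((∑ i, ξ i * (v i : ℝ))^2 / 2) := by
    rw [hq, Finset.sum_div]; exact Finset.sum_congr rfl fun v _ => by ring
  rw [e2]
  refine key.congr fun ε => ?_
  nth_rw 2 [← hm]
  rw [← Finset.sum_sub_distrib, Finset.sum_div]
  refine Finset.sum_congr rfl fun v _ => ?_
  simp only [mul_assoc, ← Finset.mul_sum]
  ring

lemma floor_lim (t : ℝ) (ht : 0 < t) :
    Tendsto (fun ε : ℝ => (⌊t / ε⌋₊ : ℝ) * ε) (𝓝[>] 0) (𝓝 t) := by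
  have h := (tendsto_nat_floor_mul_div_atTop (R := ℝ) ht.le).comp tendsto_inv_nhdsGT_zero
  refine h.congr fun ε => ?_
  simp [div_eq_mul_inv]

lemma term_lim (a t q : ℝ) (y : ℝ → ℝ) (ht : 0 < t) (ha : 0 < a)
    (hy : Tendsto (fun ε => y ε / ε^2) (𝓝[>] 0) (𝓝 (q/2))) (k : ℕ) :
    Tendsto (fun ε : ℝ => TC a ⌊t / ε⌋₊ k * (y ε / 2)^k) (𝓝[>] 0)
      (𝓝 ((-(t^2 * q / 4))^k / (poch (a+1) k * (k.factorial : ℝ)))) := by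
  have h : Tendsto (fun ε : ℝ => poch (-(⌊t / ε⌋₊ : ℝ)) k * poch ((⌊t / ε⌋₊ : ℝ) + a + 1) k * (y ε / 2)^k)
      (𝓝[>] 0) (𝓝 ((-(t^2 * q / 4))^k)) := by
    induction k with
    | zero => simpa [poch] using tendsto_const_nhds
    | succ k ih =>
      have hε : Tendsto (fun ε : ℝ => ε) (𝓝[>] 0) (𝓝 0) := tendsto_nhdsWithin_of_tendsto_nhds tendsto_id
      have hn := floor_lim t ht
      have f : Tendsto (fun ε : ℝ => (-((⌊t / ε⌋₊ : ℝ) * ε) + ε * k) *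
          ((⌊t / ε⌋₊ : ℝ) * ε + ε * (a + 1 + k)) * ((y ε / ε^2) * (1/2))) (𝓝[>] 0)
          (𝓝 ((-t + 0 * k) * (t + 0 * (a + 1 + k)) * ((q/2) * (1/2)))) :=
        ((hn.neg.add (hε.mul_const _)).mul (hn.add (hε.mul_const _))).mul (hy.mul_const _)
      have g := ih.mul f
      rw [show (-(t^2 * q / 4))^k * ((-t + 0 * k) * (t + 0 * (a + 1 + k)) * ((q/2) * (1/2)))
        = (-(t^2 * q / 4))^(k+1) by ring] at g
      refine g.congr' ?_
      filter_upwards [self_mem_nhdsWithin] with ε hε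
      have : ε ≠ 0 := ne_of_gt hε
      rw [poch_succ, poch_succ, pow_succ]
      field_simp
      ring
  refine (h.div_const (poch (a+1) k * (k.factorial : ℝ))).congr fun ε => ?_
  rw [TC]; ring

lemma gamma_poch (a : ℝ) (ha : 0 < a) (k : ℕ) :
    Real.Gamma ((k:ℝ) + a + 1) = Real.Gamma (a + 1) * poch (a+1) k := by
  induction k with
  | zero => simp [poch]
  | succ k ih =>
    rw [poch_succ, ← mul_assoc, ← ih, show ((k+1:ℕ):ℝ) + a + 1 = (k + a + 1) + 1 by push_cast; ring,
      Real.Gamma_add_one (by positivity)]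
    ring

lemma pJ_lim (a t q : ℝ) (y : ℝ → ℝ) (ht : 0 < t) (ha : 0 < a) 
    (hy : Tendsto (fun ε => y ε / ε^2) (𝓝[>] 0) (𝓝 (q/2))) :
    Tendsto (fun ε : ℝ => pJ a ⌊t / ε⌋₊ (y ε / 2)) (𝓝[>] 0)
      (𝓝 (∑' k : ℕ, (-(t^2 * q / 4))^k / (poch (a+1) k * (k.factorial : ℝ)))) := by
  simp_rw [pJ_tsum]
  have hε : Tendsto (fun ε : ℝ => ε) (𝓝[>] 0) (𝓝 0) := tendsto_nhdsWithin_of_tendsto_nhds tendsto_id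
  have hn := floor_lim t ht
  have hM : Tendsto (fun ε : ℝ => (⌊t / ε⌋₊ : ℝ) * ((⌊t / ε⌋₊ : ℝ) + 1) * |y ε / 2|) (𝓝[>] 0)
      (𝓝 (t * (t + 0) * |q/2 * (1/2)|)) := by
    refine ((hn.mul (hn.add hε)).mul (hy.mul_const (1/2)).abs).congr' ?_
    filter_upwards [self_mem_nhdsWithin] with ε hε
    have h0 : (0:ℝ) < ε := hε
    rw [show y ε / ε^2 * (1/2) = (y ε / 2) / ε^2 by ring, abs_div, abs_of_pos (pow_pos h0 2)]
    field_simp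
  refine tendsto_tsum_of_dominated_convergence
    (bound := fun k => (t * (t + 0) * |q/2 * (1/2)| + 1)^k / (k.factorial : ℝ))
    (Real.summable_pow_div_factorial _) (fun k => term_lim a t q y ht ha hy k) ?_
  filter_upwards [hM.eventually_le_const (lt_add_one _)] with ε h k
  rw [Real.norm_eq_abs]
  refine (TC_abs a ha _ k _).trans ?_
  gcongr

lemma rhs_eq (a t q : ℝ) (ht : 0 < t) (ha : 0 < a) (hq : 0 < q) :
    (2:ℝ)^a * Real.Gamma (a+1) * q^(-a/2) * t^(-a) * besselJ a (t * Real.sqrt q) =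
      ∑' k : ℕ, (-(t^2 * q / 4))^k / (poch (a+1) k * (k.factorial : ℝ)) := by
  unfold besselJ
  rw [← tsum_mul_left]
  refine tsum_congr fun k => ?_
  have hs : 0 < Real.sqrt q := Real.sqrt_pos.mpr hq
  have e1 : (t * Real.sqrt q / 2) ^ (2 * (k:ℝ) + a) = (t^2*q/4)^k * (t^a * q^(a/2) / 2^a) := by
    rw [Real.rpow_add (by positivity), show (2 * (k:ℝ)) = ((2 * k : ℕ) : ℝ) by push_cast; ring,
      Real.rpow_natCast, pow_mul, Real.div_rpow (by positivity) (by norm_num),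
      Real.mul_rpow ht.le hs.le, Real.sqrt_eq_rpow, ← Real.rpow_mul hq.le,
      ← Real.sqrt_eq_rpow, div_pow, mul_pow, Real.sq_sqrt hq.le]
    rw [show 1/2 * a = a/2 by ring]
    norm_num
  rw [e1, gamma_poch a ha, show -a/2 = -(a/2) by ring, Real.rpow_neg hq.le, Real.rpow_neg ht.le, neg_pow (t^2*q/4)]
  have h1 := (poch_pos (show 0 < a + 1 by linarith) k).ne'
  have h2 := (Real.Gamma_pos_of_pos (show 0 < a + 1 by linarith)).ne'
  have h3 : (k.factorial:ℝ) ≠ 0 := by exact_mod_cast k.factorial_pos.ne'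
  have h4 := (Real.rpow_pos_of_pos ht a).ne'
  have h5 := (Real.rpow_pos_of_pos hq (a/2)).ne'
  have h6 := (Real.rpow_pos_of_pos (show (0:ℝ) < 2 by norm_num) a).ne'
  field_simp

/-- Pointwise convergence of the discrete Fourier transforms of the Jacobi polynomial
iteration to the Fourier transform of the fundamental solution of the EPD equation. -/
theorem jacobi_iteration_fourier_pointwise
    (d : ℕ) (hd : 1 ≤ d) (ω : (Fin d → ℤ) → ℝ)
    (hfin : (Function.support ω).Finite) (hnn : ∀ v, 0 ≤ ω v)
    (hmass : ∑' v : Fin d → ℤ, ω v = 1) (hsymm : ∀ v, ω (-v) = ω v)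
    (hQ : (covQ d ω).PosDef)
    (haper : ∀ ξ : Fin d → ℝ, (∀ i, ξ i ∈ Set.Icc (-π) π) → ξ ≠ 0 →
      ‖ftOmega ω ξ‖ < 1)
    (x : ℕ → (Fin d → ℤ) → ℝ)
    (hx0 : ∀ v, x 0 v = if v = 0 then 1 else 0)
    (hx1 : ∀ v, x 1 v = aCoef0 d * latticeConv ω (x 0) v + bCoef0 d * x 0 v)
    (hrec : ∀ n, 1 ≤ n → ∀ v,
      x (n + 1) v = aCoef d n * latticeConv ω (x n) v + bCoef d n * x n v - cCoef d n * x (n - 1) v)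
    (t : ℝ) (ht : 0 < t) (ξ : Fin d → ℝ) (hξ : ξ ≠ 0) :
    Tendsto (fun ε : ℝ => ∑' v : Fin d → ℤ,
        (x ⌊t / ε⌋₊ v : ℂ) *
          Complex.exp (Complex.I * ((ε * ∑ i, ξ i * (v i : ℝ) : ℝ) : ℂ)))
      (𝓝[>] 0)
      (𝓝 (Complex.ofReal ((2 : ℝ) ^ ((d : ℝ) / 2) * Real.Gamma ((d : ℝ) / 2 + 1) *
            (ξ ⬝ᵥ (covQ d ω *ᵥ ξ)) ^ (-(d : ℝ) / 4) * t ^ (-(d : ℝ) / 2) *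
            besselJ ((d : ℝ) / 2) (t * Real.sqrt (ξ ⬝ᵥ (covQ d ω *ᵥ ξ)))))) := by
  have hd0 : (0:ℝ) < d := by exact_mod_cast hd
  have ha : (0:ℝ) < (d:ℝ)/2 := by positivity
  have hq : 0 < ξ ⬝ᵥ (covQ d ω *ᵥ ξ) := by
    simpa using hQ.dotProduct_mulVec_pos hξ
  set q := ξ ⬝ᵥ (covQ d ω *ᵥ ξ) with hqdef
  have hfin0 : (Function.support (x 0)).Finite := by
    apply (Set.finite_singleton (0 : Fin d → ℤ)).subset
    intro v hv
    by_contra h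
    apply hv
    rw [hx0]; exact if_neg h
  have hx1' : x 1 = fun v => aCoef0 d * latticeConv ω (x 0) v + bCoef0 d * x 0 v - 0 * x 0 v := by
    funext v; rw [hx1]; ring
  have hrec' : ∀ m, x (m+2) = fun v => aCoef d (m+1) * latticeConv ω (x (m+1)) v
      + bCoef d (m+1) * x (m+1) v - cCoef d (m+1) * x m v := by
    intro m; funext v; exact hrec (m+1) (by omega) v
  have hxf : ∀ n, (Function.support (x n)).Finite ∧ (Function.support (x (n+1))).Finite := by
    intro n
    induction n with
    | zero =>
      refine ⟨hfin0, ?_⟩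
      rw [zero_add, hx1']
      exact lin_fin _ _ _ _ _ _ (conv_fin _ _ hfin hfin0) hfin0 hfin0
    | succ m ih =>
      refine ⟨ih.2, ?_⟩
      rw [hrec']
      exact lin_fin _ _ _ _ _ _ (conv_fin _ _ hfin ih.2) ih.2 ih.1
  let W : (Fin d → ℝ) → ℝ := fun θ => ∑ v ∈ hfin.toFinset, ω v * Real.cos (∑ i, θ i * (v i : ℝ))
  have hW : ∀ θ, ftOmega ω θ = (W θ : ℂ) := ft_cos ω hfin hsymm
  have hp0 : ∀ θ, ftOmega (x 0) θ = (pJ ((d:ℝ)/2) 0 ((1 - W θ)/2) : ℂ) := by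
    intro θ
    rw [pJ_zero, ftOmega, tsum_eq_single 0]
    · simp [hx0]
    · intro v hv; simp [hx0, hv]
  have hp : ∀ θ n, ftOmega (x n) θ = (pJ ((d:ℝ)/2) n ((1 - W θ)/2) : ℂ) ∧
      ftOmega (x (n+1)) θ = (pJ ((d:ℝ)/2) (n+1) ((1 - W θ)/2) : ℂ) := by
    intro θ n
    induction n with
    | zero =>
      refine ⟨hp0 θ, ?_⟩
      rw [zero_add, hx1', ft_lin _ _ _ _ _ _ (conv_fin _ _ hfin hfin0) hfin0 hfin0,
        ft_conv _ _ hfin hfin0, hp0, hW, pJ_zero, pJ_one _ _ ha]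
      norm_cast
      rw [aCoef0, bCoef0]
      field_simp
      ring
    | succ m ih =>
      refine ⟨ih.2, ?_⟩
      rw [hrec', ft_lin _ _ _ _ _ _ (conv_fin _ _ hfin (hxf m).2) (hxf m).2 (hxf m).1,
        ft_conv _ _ hfin (hxf m).2, ih.1, ih.2, hW,
        pJ_rec _ ha m (aCoef d (m+1)) (bCoef d (m+1)) (cCoef d (m+1))]
      · push_cast; ring
      · rw [aCoef]; push_cast; ring
      · rw [bCoef]; push_cast; field_simp; ring
      · rw [cCoef]; push_cast; ring
  have hlim := pJ_lim ((d:ℝ)/2) t q (fun ε => 1 - W (fun i => ε * ξ i)) ht ha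
    (ft_lim ω hfin hmass ξ)
  rw [← rhs_eq _ t q ht ha hq] at hlim
  rw [show -((d:ℝ)/2)/2 = -(d:ℝ)/4 by ring, show -((d:ℝ)/2) = -(d:ℝ)/2 by ring] at hlim
  refine ((Complex.continuous_ofReal.tendsto _).comp hlim).congr fun ε => ?_
  simp only [Function.comp]
  rw [← (hp (fun i => ε * ξ i) ⌊t / ε⌋₊).1, ftOmega]
  refine tsum_congr fun v => ?_
  simp only [mul_assoc, ← Finset.mul_sum]
end
end
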